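/- Let μ be a purely point measure on ℝ^d belonging to S*(ℝ^d) with uniformly discrete support Λ such that inf_{λ∈Λ} |μ(λ)| > 0, and suppose that μ̂ is a purely point measure satisfying |μ̂|(B(0,r)) = O(r^d) as r → ∞. Then Λ is a finite union of translates of several pairwise disjoint full-rank lattices. -/

import Mathlib

open MeasureTheory SchwartzMap Metric Set
open scoped Pointwise RealInnerProductSpace ENNReal NNReal

noncomputable section

/-- Euclidean space `ℝ^d`. -/
abbrev Rd (d : ℕ) : Type := EuclideanSpace ℝ (Fin d)

/-- The space `S*(ℝ^d)` of tempered distributions: continuous linear functionals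
on the Schwartz space `S(ℝ^d)`. -/
abbrev TemperedDist (d : ℕ) : Type := SchwartzMap (Rd d) ℂ →L[ℂ] ℂ

/-- The Fourier transform of a tempered distribution: `f̂(φ) = f(φ̂)`. -/
def fourierTD {d : ℕ} (f : TemperedDist d) : TemperedDist d :=
  f.comp (fourierTransformCLM ℂ)

/-- The support of a tempered distribution: `x ∈ supp f` iff for every open
neighbourhood `U` of `x` there is a smooth compactly supported test function
supported in `U` on which `f` does not vanish. -/
def tdSupport {d : ℕ} (f : TemperedDist d) : Set (Rd d) :=
  {x | ∀ U : Set (Rd d), IsOpen U → x ∈ U →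
    ∃ φ : SchwartzMap (Rd d) ℂ, HasCompactSupport (⇑φ) ∧ tsupport (⇑φ) ⊆ U ∧ f φ ≠ 0}

/-- A set is locally finite if its intersection with every ball is finite. -/
def LocFinite {d : ℕ} (A : Set (Rd d)) : Prop :=
  ∀ (x : Rd d) (r : ℝ), (A ∩ Metric.ball x r).Finite

/-- A set is uniformly discrete if distances between distinct points are
bounded below by a positive constant. -/
def UniformlyDiscrete {d : ℕ} (A : Set (Rd d)) : Prop :=
  ∃ η > (0:ℝ), ∀ x ∈ A, ∀ y ∈ A, x ≠ y → η ≤ dist x y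

/-- A set is polynomially discrete (p-discrete) if
`|x - x'| ≥ c min{1, |x|^{-h}}` for distinct points `x, x'` of the set. -/
def PDiscrete {d : ℕ} (A : Set (Rd d)) : Prop :=
  ∃ c > (0:ℝ), ∃ h > (0:ℝ), ∀ x ∈ A, ∀ y ∈ A, x ≠ y →
    c * (if ‖x‖ ≤ 1 then 1 else ‖x‖ ^ (-h)) ≤ dist x y

/-- A set has bounded density if it is locally finite and the number of its
points in balls of radius 1 is uniformly bounded. -/
def BoundedDensity {d : ℕ} (A : Set (Rd d)) : Prop :=
  LocFinite A ∧ ∃ N : ℕ, ∀ x : Rd d, (A ∩ Metric.ball x 1).ncard ≤ N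

/-- A set is relatively dense if it intersects every ball of some fixed radius `R`. -/
def RelDense {d : ℕ} (A : Set (Rd d)) : Prop :=
  ∃ R : ℝ, 0 < R ∧ ∀ x : Rd d, ∃ a ∈ A, dist x a ≤ R

/-- A full-rank lattice in `ℝ^d` is the image of `ℤ^d` under an invertible
linear operator. -/
def IsFullRankLattice {d : ℕ} (L : Set (Rd d)) : Prop :=
  ∃ T : Rd d →ₗ[ℝ] Rd d, Function.Bijective T ∧
    L = T '' {x : Rd d | ∀ i, ∃ n : ℤ, x i = (n : ℝ)}

/-- The multi-indices `k ∈ (ℕ ∪ {0})^d` with `‖k‖ = k₁ + ⋯ + k_d ≤ K`. -/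
def mIdx (d K : ℕ) : Finset (Fin d → ℕ) :=
  (Finset.Iic fun _ => K).filter fun k => (∑ i, k i) ≤ K

/-- Partial derivative in the `i`-th coordinate direction. -/
def pderiv' {d : ℕ} (i : Fin d) (φ : Rd d → ℂ) : Rd d → ℂ :=
  fun x => fderiv ℝ φ x (EuclideanSpace.single i (1:ℝ))

/-- The mixed partial derivative `D^k = ∂^{k₁}_{x₁} ⋯ ∂^{k_d}_{x_d}`. -/
def Dmulti {d : ℕ} (k : Fin d → ℕ) : (Rd d → ℂ) → (Rd d → ℂ) :=
  ((List.finRange d).map fun i => (pderiv' i)^[k i]).foldr (· ∘ ·) id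

/-- The action of `D^k δ_λ` on a test function: `φ ↦ (-1)^{‖k‖} (D^k φ)(λ)`. -/
def dkDelta {d : ℕ} (k : Fin d → ℕ) (lam : Rd d) (φ : SchwartzMap (Rd d) ℂ) : ℂ :=
  (-1 : ℂ) ^ (∑ i, k i) * Dmulti k (⇑φ) lam

/-- The exponential `e^{2πi⟨x,w⟩}`. -/
def e2pi {d : ℕ} (x w : Rd d) : ℂ :=
  Complex.exp (((2 * Real.pi : ℝ) : ℂ) * Complex.I * ((⟪x, w⟫ : ℝ) : ℂ))

/-- A trigonometric polynomial: a finite sum `Σ c_ω e^{2πi⟨x,ω⟩}`. -/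
def IsTrigPoly {d : ℕ} (P : Rd d → ℂ) : Prop :=
  ∃ (n : ℕ) (cc : Fin n → ℂ) (w : Fin n → Rd d),
    ∀ x, P x = ∑ i, cc i * e2pi x (w i)

/-- The monomial `x^m = x₁^{m₁} ⋯ x_d^{m_d}` (as a complex number). -/
def monom {d : ℕ} (m : Fin d → ℕ) (x : Rd d) : ℂ := ((∏ i, (x i) ^ (m i) : ℝ) : ℂ)

/-- The total variation of the pure point measure with masses `b` on the open
ball `B(0,r)`: `Σ_{|γ| < r} |b(γ)|` (as an extended nonnegative real). -/
def ballVar {d : ℕ} (b : Rd d → ℂ) (r : ℝ) : ℝ≥0∞ :=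
  ∑' γ : Rd d, if ‖γ‖ < r then (‖b γ‖₊ : ℝ≥0∞) else 0

/-- The pure point measure `μ = Σ_λ a(λ) δ_λ` belongs to `S*(ℝ^d)` and is
represented there by the tempered distribution `f`: its support is countable,
`Σ_λ |a(λ)| |φ(λ)| < ∞` for every Schwartz function `φ`, and the (automatically
continuous) functional `φ ↦ Σ_λ a(λ) φ(λ)` coincides with `f`. -/
def RepMeasure {d : ℕ} (a : Rd d → ℂ) (f : TemperedDist d) : Prop :=
  {x | a x ≠ 0}.Countable ∧
  (∀ φ : SchwartzMap (Rd d) ℂ, Summable fun lam => ‖a lam‖ * ‖φ lam‖) ∧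
  (∀ φ : SchwartzMap (Rd d) ℂ, f φ = ∑' lam, a lam * φ lam)

/-- A continuous function on `ℝ^d` is almost periodic if for every `ε > 0` its
set of `ε`-almost periods is relatively dense. -/
def APFunction {d : ℕ} (g : Rd d → ℂ) : Prop :=
  Continuous g ∧ ∀ ε > (0:ℝ), RelDense {τ : Rd d | ∀ t, ‖g (t + τ) - g t‖ < ε}

/-- A tempered distribution is almost periodic if for every smooth compactly
supported `ψ` the function `t ↦ f(ψ(t - ·))` is almost periodic. -/
def APDistribution {d : ℕ} (f : TemperedDist d) : Prop :=
  ∀ ψ : Rd d → ℂ, ContDiff ℝ (⊤ : ℕ∞) ψ → HasCompactSupport ψ →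
    ∀ Φ : Rd d → SchwartzMap (Rd d) ℂ, (∀ t y, Φ t y = ψ (t - y)) →
      APFunction fun t => f (Φ t)


set_option linter.unusedSectionVars false
section Lattice
variable {E : Type*} [NormedAddCommGroup E] [InnerProductSpace ℝ E] [FiniteDimensional ℝ E]

def UDisc (P : AddSubgroup E) : Prop := ∃ ρ > (0:ℝ), ∀ p ∈ P, p ≠ 0 → ρ ≤ ‖p‖
def Coc (S : Set E) : Prop := ∃ R : ℝ, ∀ x : E, ∃ p ∈ S, ‖x - p‖ ≤ R
def Ltc (P : AddSubgroup E) : Prop := UDisc P ∧ Coc (P : Set E)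

theorem Coc.mono {S T : Set E} (h : Coc S) (hST : S ⊆ T) : Coc T := by
  obtain ⟨R, hR⟩ := h
  refine ⟨R, fun x => ?_⟩
  obtain ⟨p, hp, h⟩ := hR x
  exact ⟨p, hST hp, h⟩

theorem sep_finite {S : Set E} {ρ : ℝ} (hρ : 0 < ρ)
    (hS : ∀ x ∈ S, ∀ y ∈ S, x ≠ y → ρ ≤ dist x y) (c : E) (R : ℝ) :
    (S ∩ closedBall c R).Finite := by
  have htb : TotallyBounded (closedBall c R) := (isCompact_closedBall c R).totallyBounded
  obtain ⟨t, ht, hc⟩ := Metric.totallyBounded_iff.1 htb (ρ / 2) (by linarith)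
  refine Set.Finite.subset (ht.biUnion (t := fun y => S ∩ ball y (ρ/2)) ?_) ?_
  · intro y _
    apply Set.Subsingleton.finite
    rintro x ⟨hx, hxy⟩ x' ⟨hx', hx'y⟩
    by_contra hne
    have := hS x hx x' hx' hne
    have h2 := dist_triangle_right x x' y
    rw [mem_ball] at hxy hx'y
    linarith
  · rintro x ⟨hx, hxb⟩
    have := hc hxb
    simp only [mem_iUnion] at this ⊢
    obtain ⟨y, hy, h⟩ := this
    exact ⟨y, hy, hx, h⟩

theorem UDisc.finite {P : AddSubgroup E} (h : UDisc P) (c : E) (R : ℝ) :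
    ((P : Set E) ∩ closedBall c R).Finite := by
  obtain ⟨ρ, hρ, h⟩ := h
  refine sep_finite hρ (fun x hx y hy hxy => ?_) c R
  rw [dist_eq_norm]
  exact h _ (P.sub_mem hx hy) (sub_ne_zero.2 hxy)

theorem finite_pos_min {S : Set E} (hS : S.Finite) : ∃ ρ > (0:ℝ), ∀ p ∈ S, p ≠ 0 → ρ ≤ ‖p‖ := by
  induction S, hS using Set.Finite.induction_on with
  | empty => exact ⟨1, one_pos, by simp⟩
  | @insert a s _ _ ih =>
    obtain ⟨ρ, hρ, h⟩ := ih
    by_cases ha : a = 0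
    · refine ⟨ρ, hρ, ?_⟩
      rintro p (rfl | hp) hp0
      · exact absurd ha hp0
      · exact h p hp hp0
    · refine ⟨min ρ ‖a‖, lt_min hρ (norm_pos_iff.2 ha), ?_⟩
      rintro p (rfl | hp) hp0
      · exact min_le_right _ _
      · exact (min_le_left _ _).trans (h p hp hp0)

theorem udisc_of_locfin {S : Set E} (h : (S ∩ closedBall 0 1).Finite) :
    ∃ ρ > (0:ℝ), ∀ p ∈ S, p ≠ 0 → ρ ≤ ‖p‖ := by
  obtain ⟨ρ, hρ, hh⟩ := finite_pos_min h
  refine ⟨min ρ 1, lt_min hρ one_pos, fun p hp hp0 => ?_⟩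
  by_cases h1 : ‖p‖ ≤ 1
  · exact (min_le_left _ _).trans (hh p ⟨hp, by simpa using h1⟩ hp0)
  · exact (min_le_right _ _).trans (not_le.1 h1).le

theorem UDisc.finite_add {P : AddSubgroup E} (h : UDisc P) {K : Set E} (hK : K.Finite) (c : E)
    (R : ℝ) : ((K + (P : Set E)) ∩ closedBall c R).Finite := by
  refine (hK.biUnion (t := fun k => (fun p => k + p) '' ((P : Set E) ∩ closedBall (c - k) R))
    (fun k _ => (h.finite _ _).image _)).subset ?_
  rintro x ⟨⟨k, hk, p, hp, rfl⟩, hx⟩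
  simp only [mem_iUnion]
  refine ⟨k, hk, p, ⟨hp, ?_⟩, rfl⟩
  rw [mem_closedBall, dist_eq_norm] at hx ⊢
  convert hx using 2
  simp only; abel

theorem UDisc.mono {P Q : AddSubgroup E} (h : UDisc Q) (hPQ : P ≤ Q) : UDisc P := by
  obtain ⟨ρ, hρ, h⟩ := h
  exact ⟨ρ, hρ, fun p hp => h p (hPQ hp)⟩

theorem Coc.of_cover {K S N : Set E} (hS : Coc S) (hK : K.Finite) (h : S ⊆ K + N) : Coc N := by
  obtain ⟨R, hR⟩ := hS
  obtain ⟨B, hB⟩ := hK.isBounded.exists_norm_le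
  refine ⟨R + B, fun x => ?_⟩
  obtain ⟨p, hp, hx⟩ := hR x
  obtain ⟨k, hk, n, hn, rfl⟩ := h hp
  refine ⟨n, hn, ?_⟩
  calc ‖x - n‖ = ‖(x - (k + n)) + k‖ := by congr 1; abel
    _ ≤ ‖x - (k+n)‖ + ‖k‖ := norm_add_le _ _
    _ ≤ R + B := add_le_add hx (hB k hk)

theorem Coc.cover {N P : AddSubgroup E} (hN : Coc (N : Set E)) (hP : UDisc P) (hNP : N ≤ P) :
    ∃ F : Set E, F.Finite ∧ F ⊆ P ∧ (P : Set E) ⊆ F + N := by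
  obtain ⟨R, hR⟩ := hN
  refine ⟨P ∩ closedBall 0 R, hP.finite _ _, inter_subset_left, fun p hp => ?_⟩
  obtain ⟨n, hn, h⟩ := hR p
  exact ⟨p - n, ⟨P.sub_mem hp (hNP hn), by simpa using h⟩, n, hn, by simp⟩

theorem Ltc.of_cover {N P : AddSubgroup E} (hP : Ltc P) (hNP : N ≤ P) {K : Set E}
    (hK : K.Finite) (h : (P : Set E) ⊆ K + N) : Ltc N :=
  ⟨hP.1.mono hNP, hP.2.of_cover hK h⟩

theorem Ltc.sup {P Q : AddSubgroup E} (hP : Ltc P) (hQ : Ltc Q)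
    (h : Coc ((P ⊓ Q : AddSubgroup E) : Set E)) : Ltc (P ⊔ Q) := by
  refine ⟨?_, hP.2.mono (SetLike.coe_subset_coe.2 le_sup_left)⟩
  obtain ⟨F, hF, -, hFc⟩ := h.cover hP.1 inf_le_left
  obtain ⟨G, hG, -, hGc⟩ := h.cover hQ.1 inf_le_right
  have hN : UDisc (P ⊓ Q) := hP.1.mono inf_le_left
  refine udisc_of_locfin (((hN.finite_add (hF.add hG) 0 1)).subset
    (inter_subset_inter_left _ ?_))
  intro x hx
  obtain ⟨p, hp, q, hq, rfl⟩ := AddSubgroup.mem_sup.1 hx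
  obtain ⟨f, hf, n, hn, rfl⟩ := hFc hp
  obtain ⟨g, hg, m, hm, rfl⟩ := hGc hq
  exact ⟨f + g, add_mem_add hf hg, n + m, add_mem hn hm, by simp only; abel⟩

theorem exists_close {P R : AddSubgroup E} (hP : Ltc P) (hR : Ltc R)
    (h : ¬ Coc ((P ⊓ R : AddSubgroup E) : Set E)) {η : ℝ} (hη : 0 < η) :
    ∃ r ∈ P, ∃ r' ∈ R, r ≠ r' ∧ ‖r - r'‖ < η := by
  by_contra! hcon
  apply h
  have hU : UDisc (P ⊔ R) := by
    refine ⟨η, hη, fun x hx hx0 => ?_⟩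
    obtain ⟨p, hp, q, hq, rfl⟩ := AddSubgroup.mem_sup.1 hx
    have := hcon p hp (-q) (R.neg_mem hq) (fun h => hx0 (by rw [h]; simp))
    simpa using this
  obtain ⟨R0, hR0⟩ := hR.2
  have hfin := hU.finite 0 R0
  have key : ∀ f : E, ∃ g : E, (∃ p ∈ P, p - f ∈ R) → (g ∈ P ∧ g - f ∈ R) := by
    intro f
    by_cases hf : ∃ p ∈ P, p - f ∈ R
    · obtain ⟨p, hp⟩ := hf
      exact ⟨p, fun _ => hp⟩
    · exact ⟨0, fun h => absurd h hf⟩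
  choose g hg using key
  refine hP.2.of_cover (hfin.image g) (fun p hp => ?_)
  obtain ⟨r, hr, hpr⟩ := hR0 p
  have h1 := hg (p - r) ⟨p, hp, by simpa using hr⟩
  refine ⟨g (p - r), ⟨p - r, ⟨?_, by simpa using hpr⟩, rfl⟩, p - g (p - r), ?_, by simp⟩
  · exact AddSubgroup.sub_mem _ (le_sup_left (a := P) hp) (le_sup_right (a := P) hr)
  · refine ⟨P.sub_mem hp h1.1, ?_⟩
    have : p - g (p - r) = r - (g (p - r) - (p - r)) := by abel
    rw [this]
    exact R.sub_mem hr h1.2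

theorem coc_of_span {N : AddSubgroup E} (h : Submodule.span ℝ (N : Set E) = ⊤) :
    Coc (N : Set E) := by
  obtain ⟨b, hb⟩ : ∃ b : Module.Basis (Fin (Module.finrank ℝ E)) ℝ E, ∀ i, b i ∈ N := by
    have : Finite ((linearIndepOn_empty ℝ id).extend (empty_subset (N : Set E))) :=
      Module.Finite.finite_basis (Module.Basis.ofSpan h.ge)
    have := Fintype.ofFinite ((linearIndepOn_empty ℝ id).extend (empty_subset (N : Set E)))
    refine ⟨(Module.Basis.ofSpan h.ge).reindex (Fintype.equivOfCardEq ?_), fun i => ?_⟩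
    · rw [Fintype.card_fin, Module.finrank_eq_card_basis (Module.Basis.ofSpan h.ge)]
    · rw [Module.Basis.reindex_apply]
      exact Module.Basis.ofSpan_subset h.ge ⟨_, rfl⟩
  refine ⟨∑ i, ‖b i‖, fun x => ?_⟩
  refine ⟨(ZSpan.floor b x : E), ?_, ZSpan.norm_fract_le b x⟩
  have : Submodule.span ℤ (Set.range b) ≤ AddSubgroup.toIntSubmodule N := by
    rw [Submodule.span_le]; rintro _ ⟨i, rfl⟩; exact hb i
  exact this (ZSpan.floor b x).2

theorem low_not_coc {ι : Type*} (s : Finset ι) (w : ι → E) (M : ι → Submodule ℝ E)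
    (hM : ∀ i ∈ s, M i ≠ ⊤) : ¬ Coc (⋃ i ∈ s, (fun y => w i + y) '' (M i : Set E)) := by
  rintro ⟨R, hR⟩
  have hv : ∃ v : E, ∀ i ∈ s, v ∉ M i := by
    classical
    have := Subspace.biUnion_ne_univ_of_top_notMem (k := ℝ) (E := E) (s := s.image M) (by
      intro hh
      obtain ⟨i, hi, h⟩ := Finset.mem_image.1 hh
      exact hM i hi h)
    rw [Set.ne_univ_iff_exists_notMem] at this
    obtain ⟨v, hv⟩ := this
    refine ⟨v, fun i hi hvi => hv ?_⟩
    simp only [mem_iUnion]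
    exact ⟨M i, Finset.mem_image_of_mem _ hi, hvi⟩
  obtain ⟨v, hv⟩ := hv
  have hd : ∀ i ∈ s, ∃ t : ℝ, ∀ t' ≥ t, ∀ y ∈ M i, R < ‖t' • v - (w i + y)‖ := by
    intro i hi
    have hpos : 0 < infDist v (M i : Set E) := by
      have hcl : IsClosed (M i : Set E) := (M i).closed_of_finiteDimensional
      exact (hcl.notMem_iff_infDist_pos ⟨0, (M i).zero_mem⟩).1 (hv i hi)
    refine ⟨max 1 ((R + ‖w i‖ + 1) / infDist v (M i : Set E)), fun t ht y hy => ?_⟩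
    have ht0 : 0 < t := lt_of_lt_of_le one_pos ((le_max_left _ _).trans ht)
    have h1 : infDist v (M i : Set E) ≤ dist v (t⁻¹ • y) :=
      infDist_le_dist_of_mem ((M i).smul_mem _ hy)
    have h2 : t * infDist v (M i : Set E) ≤ ‖t • v - y‖ := by
      have : t • v - y = t • (v - t⁻¹ • y) := by
        rw [smul_sub, smul_smul, mul_inv_cancel₀ ht0.ne', one_smul]
      rw [this, norm_smul, Real.norm_of_nonneg ht0.le, ← dist_eq_norm]
      gcongr
    have h3 : R + ‖w i‖ + 1 ≤ t * infDist v (M i : Set E) :=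
      (div_le_iff₀ hpos).1 ((le_max_right _ _).trans ht)
    have h4 : ‖t • v - y‖ ≤ ‖t • v - (w i + y)‖ + ‖w i‖ := by
      calc _ = ‖(t • v - (w i + y)) + w i‖ := by congr 1; abel
        _ ≤ _ := norm_add_le _ _
    linarith
  choose! t ht using hd
  obtain ⟨t0, ht0⟩ := (s.image t).finite_toSet.bddAbove
  obtain ⟨p, hp, hpR⟩ := hR (t0 • v)
  simp only [mem_iUnion] at hp
  obtain ⟨i, hi, y, hy, rfl⟩ := hp
  have := ht i hi t0 (ht0 (by simpa using ⟨i, hi, rfl⟩)) y hy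
  exact absurd hpR (not_le.2 this)

theorem Coc.span {N : AddSubgroup E} (h : Coc (N : Set E)) :
    Submodule.span ℝ (N : Set E) = ⊤ := by
  by_contra hne
  refine low_not_coc {()} (fun _ => (0:E)) (fun _ => Submodule.span ℝ (N : Set E))
    (fun _ _ => hne) (h.mono fun x hx => ?_)
  simp only [mem_iUnion]
  exact ⟨(), by simp, x, Submodule.subset_span hx, by simp⟩

theorem UDisc.exists_indep {N : AddSubgroup E} (h : UDisc N) :
    ∃ (k : ℕ) (v : Fin k → E), LinearIndependent ℝ v ∧
      AddSubgroup.toIntSubmodule N = Submodule.span ℤ (Set.range v) := by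
  let M := AddSubgroup.toIntSubmodule N
  obtain ⟨ρ, hρ, hρ'⟩ := h
  have : DiscreteTopology M := by
    refine DiscreteTopology.of_forall_le_norm hρ (fun x hx => ?_)
    exact hρ' x.1 x.2 (fun h => hx (Subtype.ext h))
  have : Module.Finite ℤ M := inferInstance
  have : Module.Free ℤ M := inferInstance
  let b := Module.finBasis ℤ M
  have hs : Submodule.span ℤ (Set.range fun i => (b i : E)) = M := by
    have := congrArg (Submodule.map M.subtype) b.span_eq
    rw [Submodule.map_span, Submodule.map_top, Submodule.range_subtype, ← Set.range_comp] at this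
    exact this
  refine ⟨_, fun i => (b i : E), ?_, hs.symm⟩
  rw [linearIndependent_iff_card_eq_finrank_span, Fintype.card_fin]
  have h1 := Real.finrank_eq_int_finrank_of_discrete (s := Set.range fun i => (b i : E))
    (by rw [hs]; infer_instance)
  rw [h1, Set.finrank, hs]

theorem basis_ltc {ι : Type*} [Finite ι] (b : Module.Basis ι ℝ E) :
    Ltc (Submodule.span ℤ (Set.range b)).toAddSubgroup := by
  have := Fintype.ofFinite ι
  refine ⟨udisc_of_locfin ?_, ?_⟩
  · rw [inter_comm]
    exact ZSpan.setFinite_inter b isBounded_closedBall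
  · exact ⟨∑ i, ‖b i‖, fun x => ⟨ZSpan.floor b x, (ZSpan.floor b x).2, ZSpan.norm_fract_le b x⟩⟩

theorem UDisc.exists_ltc {N : AddSubgroup E} (h : UDisc N) : ∃ P, Ltc P ∧ N ≤ P := by
  obtain ⟨k, v, hv, hN⟩ := h.exists_indep
  let b := Module.Basis.extend hv.linearIndepOn_id
  have : Finite (hv.linearIndepOn_id.extend (subset_univ (Set.range v))) :=
    Module.Finite.finite_basis b
  refine ⟨_, basis_ltc b, ?_⟩
  have : AddSubgroup.toIntSubmodule N ≤ Submodule.span ℤ (Set.range b) := by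
    rw [hN]
    apply Submodule.span_mono
    rw [Module.Basis.range_extend]
    exact hv.linearIndepOn_id.subset_extend _
  exact this

theorem Ltc.exists_basis {P : AddSubgroup E} (h : Ltc P) :
    ∃ b : Module.Basis (Fin (Module.finrank ℝ E)) ℝ E,
      AddSubgroup.toIntSubmodule P = Submodule.span ℤ (Set.range b) := by
  obtain ⟨k, v, hv, hN⟩ := h.1.exists_indep
  have hsp : Submodule.span ℝ (Set.range v) = ⊤ := by
    rw [← h.2.span]
    have h1 : (P : Set E) = (Submodule.span ℤ (Set.range v) : Set E) := by rw [← hN]; rfl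
    rw [h1, Submodule.span_span_of_tower]
  let b := Module.Basis.mk hv hsp.ge
  have hk : k = Module.finrank ℝ E := by
    rw [Module.finrank_eq_card_basis b, Fintype.card_fin]
  subst hk
  exact ⟨b, by rw [hN, Module.Basis.coe_mk]⟩

end Lattice


section Bohr
open Filter Topology
variable {E : Type*} [NormedAddCommGroup E] [InnerProductSpace ℝ E] [FiniteDimensional ℝ E]

def bch (γ τ : E) : Circle := Real.fourierChar ⟪τ, γ⟫

theorem bch_add (γ τ σ : E) : bch γ (τ + σ) = bch γ τ * bch γ σ := by
  simp [bch, inner_add_left, AddChar.map_add_eq_mul]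

theorem bch_sub (γ τ σ : E) : bch γ (τ - σ) = bch γ τ / bch γ σ := by
  simp [bch, inner_sub_left, AddChar.map_sub_eq_div]

theorem bch_zero (γ : E) : bch γ 0 = 1 := by simp [bch]

variable (E) in
def bohr : Filter E := ⨅ γ : E, comap (bch γ) (𝓝 1)

theorem tendsto_bohr {α : Type*} {f : α → E} {l : Filter α} :
    Tendsto f l (bohr E) ↔ ∀ γ, Tendsto (fun x => bch γ (f x)) l (𝓝 1) := by
  simp only [bohr, tendsto_iInf, tendsto_comap_iff]; rfl

theorem bohr_tendsto (γ : E) : Tendsto (bch γ) (bohr E) (𝓝 1) := tendsto_bohr.1 tendsto_id γ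

theorem pure_le_bohr : pure (0:E) ≤ bohr E := by
  have : Tendsto (id : E → E) (pure 0) (bohr E) := by
    rw [tendsto_bohr]; intro γ
    rw [tendsto_pure_left]
    intro s hs
    simpa [bch_zero] using mem_of_mem_nhds hs
  simpa only [Tendsto, map_id] using this

theorem zero_mem_bohr {T : Set E} (hT : T ∈ bohr E) : (0:E) ∈ T := pure_le_bohr hT

instance : (bohr E).NeBot := neBot_of_le pure_le_bohr

theorem bohr_inf_neBot (P : AddSubgroup E) : (bohr E ⊓ 𝓟 (P : Set E)).NeBot :=
  neBot_of_le (f := pure (0:E)) (le_inf pure_le_bohr (by simp))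

theorem bohr_add : Tendsto (fun p : E × E => p.1 + p.2) (bohr E ×ˢ bohr E) (bohr E) := by
  rw [tendsto_bohr]; intro γ
  simp only [bch_add]
  simpa using ((bohr_tendsto γ).comp tendsto_fst).mul ((bohr_tendsto γ).comp tendsto_snd)

theorem bohr_neg : Tendsto (fun p : E => -p) (bohr E) (bohr E) := by
  rw [tendsto_bohr]; intro γ
  have : ∀ x : E, bch γ (-x) = (bch γ x)⁻¹ := fun x => by
    simp [bch, AddChar.map_neg_eq_inv]
  simp only [this]
  simpa using (bohr_tendsto γ).inv

theorem bohr_add_mem {T : Set E} (hT : T ∈ bohr E) :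
    ∃ T' ∈ bohr E, ∀ x ∈ T', ∀ y ∈ T', x + y ∈ T := by
  obtain ⟨T', h, h2⟩ := mem_prod_same_iff.1 (bohr_add hT)
  exact ⟨T', h, fun x hx y hy => h2 (mk_mem_prod hx hy)⟩

theorem ultra_sub (U : Ultrafilter E) :
    Tendsto (fun p : E × E => p.1 - p.2) ((U : Filter E) ×ˢ (U : Filter E)) (bohr E) := by
  rw [tendsto_bohr]; intro γ
  simp only [bch_sub]
  obtain ⟨c, -, hc⟩ := isCompact_univ.ultrafilter_le_nhds (U.map (bch γ)) (by simp)
  have hc' : Tendsto (bch γ) U (𝓝 c) := hc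
  simpa using (hc'.comp tendsto_fst).div' (hc'.comp tendsto_snd)

theorem fin_cov {α ι : Type*} (F : Filter α) (S : ι → Set α)
    (h : ∀ U : Ultrafilter α, (U : Filter α) ≤ F → ∃ i, S i ∈ U) :
    ∃ t : Set ι, t.Finite ∧ (⋃ i ∈ t, S i) ∈ F := by
  by_contra! hcon
  have : Nonempty α := by
    by_contra hn
    rw [not_nonempty_iff] at hn
    exact hcon ∅ finite_empty (by rw [Subsingleton.elim F ⊥]; trivial)
  have hne : (F ⊓ ⨅ t : Finset ι, 𝓟 (⋃ i ∈ t, S i)ᶜ).NeBot := by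
    rw [inf_iInf]
    refine iInf_neBot_of_directed ?_ ?_
    · classical
      intro s t
      refine ⟨s ∪ t, inf_le_inf_left _ (principal_mono.2 (compl_subset_compl.2 ?_)),
        inf_le_inf_left _ (principal_mono.2 (compl_subset_compl.2 ?_))⟩ <;>
      · apply biUnion_subset_biUnion_left; intro x hx; simp at hx ⊢; tauto
    · intro t
      rw [inf_principal_neBot_iff]
      intro V hV
      by_contra hn
      refine hcon t t.finite_toSet (mem_of_superset hV fun x hx => ?_)
      by_contra hx'
      exact hn ⟨x, hx, hx'⟩
  obtain ⟨U, hU⟩ := Ultrafilter.exists_le (F ⊓ ⨅ t : Finset ι, 𝓟 (⋃ i ∈ t, S i)ᶜ)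
  obtain ⟨i, hi⟩ := h U (hU.trans inf_le_left)
  have h2 : (U : Filter α) ≤ 𝓟 (⋃ j ∈ ({i} : Finset ι), S j)ᶜ :=
    hU.trans (inf_le_right.trans (iInf_le _ _))
  have h3 := le_principal_iff.1 h2
  simp only [Finset.mem_singleton, iUnion_iUnion_eq_left] at h3
  exact (Ultrafilter.compl_notMem_iff.2 hi) h3

theorem bohr_cover (P : AddSubgroup E) {T : Set E} (hT : T ∈ bohr E) :
    ∃ F : Set E, F.Finite ∧ (P : Set E) ⊆ F + ((P : Set E) ∩ T) := by
  obtain ⟨t, ht, h⟩ := fin_cov (𝓟 (P : Set E)) (fun x : E => (fun y => x + y) '' ((P : Set E) ∩ T)) (by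
    intro U hU
    obtain ⟨A, hA, h2⟩ := mem_prod_same_iff.1 (ultra_sub U hT)
    have hP : (P : Set E) ∈ U := le_principal_iff.1 hU
    have hAP := inter_mem hA hP
    obtain ⟨x, hxA, hxP⟩ := U.nonempty_of_mem hAP
    refine ⟨x, mem_of_superset hAP ?_⟩
    rintro y ⟨hyA, hyP⟩
    exact ⟨y - x, ⟨P.sub_mem hyP hxP, h2 (mk_mem_prod hyA hxA)⟩, by simp⟩)
  refine ⟨t, ht, fun p hp => ?_⟩
  have := (mem_principal.1 h) hp
  simp only [mem_iUnion] at this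
  obtain ⟨x, hx, y, hy, rfl⟩ := this
  exact ⟨x, hx, y, hy, rfl⟩

theorem bohr_coc {T : Set E} (hT : T ∈ bohr E) : Coc T := by
  obtain ⟨F, hF, h⟩ := bohr_cover ⊤ hT
  have h1 : Coc ((⊤ : AddSubgroup E) : Set E) := ⟨0, fun x => ⟨x, trivial, by simp⟩⟩
  exact (h1.of_cover hF h).mono inter_subset_right

theorem bohr_coc_lat {P : AddSubgroup E} (hP : Ltc P) {T : Set E} (hT : T ∈ bohr E) :
    Coc ((P : Set E) ∩ T) := by
  obtain ⟨F, hF, h⟩ := bohr_cover P hT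
  exact hP.2.of_cover hF h

theorem bohr_round (γ : E) {δ : ℝ} (hδ : 0 < δ) :
    ∀ᶠ τ in bohr E, |⟪τ, γ⟫ - round ⟪τ, γ⟫| < δ := by
  have h1 : Tendsto (fun τ : E => ((bch γ τ : Circle) : ℂ).re) (bohr E) (𝓝 1) := by
    have : Continuous fun z : Circle => (z : ℂ).re := by fun_prop
    simpa [Function.comp_def] using (this.tendsto 1).comp (bohr_tendsto γ)
  have h2 : ∀ᶠ τ in bohr E, 1 - 8 * δ ^ 2 < ((bch γ τ : Circle) : ℂ).re :=
    h1.eventually_const_lt (by nlinarith)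
  filter_upwards [h2] with τ hτ
  set t := ⟪τ, γ⟫
  have hre : ((bch γ τ : Circle) : ℂ).re = Real.cos (2 * Real.pi * (t - round t)) := by
    have h3 : ((bch γ τ : Circle) : ℂ).re = Real.cos (2 * Real.pi * t) := by
      simp only [bch, Real.fourierChar_apply]
      rw [show Complex.exp (↑(2 * Real.pi * t) * Complex.I) = _ from rfl,
        Complex.exp_ofReal_mul_I_re]
    rw [h3, mul_sub, show 2 * Real.pi * (round t : ℝ) = (round t : ℤ) * (2 * Real.pi) by ring,
      Real.cos_sub_int_mul_two_pi]
  have hs : |t - round t| ≤ 1 / 2 := abs_sub_round t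
  have hpi := Real.pi_pos
  have hc := Real.cos_le_one_sub_mul_cos_sq (x := 2 * Real.pi * (t - round t)) (by
    rw [abs_mul, abs_of_pos (by positivity)]; nlinarith)
  rw [hre] at hτ
  have h5 : 2 / Real.pi ^ 2 * (2 * Real.pi * (t - round t)) ^ 2 = 8 * (t - round t) ^ 2 := by
    field_simp; ring
  rw [h5] at hc
  apply abs_lt_of_sq_lt_sq (by nlinarith) hδ.le

theorem bohr_near {P : AddSubgroup E} (hP : Ltc P) {δ : ℝ} (hδ : 0 < δ) :
    ∀ᶠ τ in bohr E, ∃ p ∈ P, ‖τ - p‖ < δ := by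
  obtain ⟨b, hb⟩ := hP.exists_basis
  set B := ∑ i, ‖b i‖
  have hB : 0 ≤ B := Finset.sum_nonneg fun _ _ => norm_nonneg _
  let g : Fin (Module.finrank ℝ E) → E := fun i =>
    (InnerProductSpace.toDual ℝ E).symm (LinearMap.toContinuousLinearMap (b.coord i))
  have hg : ∀ i x, ⟪x, g i⟫ = b.repr x i := by
    intro i x
    rw [real_inner_comm, InnerProductSpace.toDual_symm_apply]; rfl
  have hall : ∀ᶠ τ in bohr E, ∀ i, |⟪τ, g i⟫ - round ⟪τ, g i⟫| < δ / (B + 1) :=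
    eventually_all.2 fun i => bohr_round (g i) (by positivity)
  filter_upwards [hall] with τ hτ
  refine ⟨∑ i, round (b.repr τ i) • b i, ?_, ?_⟩
  · have : ∑ i, round (b.repr τ i) • b i ∈ AddSubgroup.toIntSubmodule P := by
      rw [hb]
      exact Submodule.sum_mem _ fun i _ =>
        Submodule.smul_mem _ _ (Submodule.subset_span ⟨i, rfl⟩)
    exact this
  · have h1 : τ - ∑ i, round (b.repr τ i) • b i
        = ∑ i, (b.repr τ i - round (b.repr τ i)) • b i := by
      conv_lhs => rw [← b.sum_repr τ]
      rw [← Finset.sum_sub_distrib]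
      refine Finset.sum_congr rfl fun i _ => ?_
      simp [sub_smul, Int.cast_smul_eq_zsmul]
    rw [h1]
    calc _ ≤ ∑ i, ‖(b.repr τ i - round (b.repr τ i)) • b i‖ := norm_sum_le _ _
      _ ≤ ∑ i, δ / (B + 1) * ‖b i‖ := by
        refine Finset.sum_le_sum fun i _ => ?_
        rw [norm_smul, Real.norm_eq_abs]
        have := hτ i
        rw [hg] at this
        gcongr
      _ = δ * (B / (B + 1)) := by rw [← Finset.mul_sum]; ring
      _ < δ := by
        have : B / (B + 1) < 1 := by rw [div_lt_one (by positivity)]; linarith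
        nlinarith

end Bohr


section Hilb
open Filter Topology
variable {E : Type*} [NormedAddCommGroup E] [InnerProductSpace ℝ E] [FiniteDimensional ℝ E]
variable {H : Type*} [NormedAddCommGroup H] [InnerProductSpace ℂ H] [CompleteSpace H]

def wk (h : H) : WeakDual ℂ H := StrongDual.toWeakDual (InnerProductSpace.toDual ℂ H h)

theorem wt_iff {α : Type*} {g : α → H} {l : Filter α} {w : H} :
    Tendsto (fun x => wk (g x)) l (𝓝 (wk w)) ↔
      ∀ y, Tendsto (fun x => inner ℂ (g x) y) l (𝓝 (inner ℂ w y)) :=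
  tendsto_iff_forall_eval_tendsto_topDualPairing

theorem wt_iff' {α : Type*} {g : α → H} {l : Filter α} {w : H} :
    Tendsto (fun x => wk (g x)) l (𝓝 (wk w)) ↔
      ∀ y, Tendsto (fun x => inner ℂ y (g x)) l (𝓝 (inner ℂ y w)) := by
  rw [wt_iff]
  refine forall_congr' fun y => ⟨fun h => ?_, fun h => ?_⟩
  · simpa [Function.comp_def] using (Complex.continuous_conj.tendsto _).comp h
  · simpa [Function.comp_def] using (Complex.continuous_conj.tendsto _).comp h

theorem wk_surj (φ : WeakDual ℂ H) : ∃ w : H, wk w = φ := by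
  refine ⟨(InnerProductSpace.toDual ℂ H).symm (WeakDual.toStrongDual φ), ?_⟩
  simp only [wk, LinearIsometryEquiv.apply_symm_apply]; rfl

def WCl (F : Filter E) (g : E → H) : Set H := {w | MapClusterPt (wk w) F (fun x => wk (g x))}

theorem wk_ball (C : ℝ) : (WeakDual.toStrongDual ⁻¹' closedBall 0 C : Set (WeakDual ℂ H))
    = wk '' closedBall (0:H) C := by
  ext φ
  obtain ⟨w, rfl⟩ := wk_surj φ
  constructor
  · intro h
    refine ⟨w, ?_, rfl⟩
    have : ‖InnerProductSpace.toDual ℂ H w‖ ≤ C := by simpa [wk] using h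
    simpa using this
  · rintro ⟨w', hw', h⟩
    rw [← h]
    have : ‖InnerProductSpace.toDual ℂ H w'‖ ≤ C := by simpa using hw'
    simpa [wk] using this

theorem wk_compact (C : ℝ) : IsCompact (wk '' closedBall (0:H) C) := by
  rw [← wk_ball]; exact WeakDual.isCompact_closedBall 0 C

theorem wk_inj : Function.Injective (wk : H → WeakDual ℂ H) := by
  intro x y h
  exact (InnerProductSpace.toDual ℂ H).injective (StrongDual.toWeakDual.injective h)

theorem exists_wlim {α : Type*} (V : Ultrafilter α) (g : α → H) (C : ℝ) (hg : ∀ x, ‖g x‖ ≤ C) :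
    ∃ w, Tendsto (fun x => wk (g x)) V (𝓝 (wk w)) := by
  obtain ⟨φ, ⟨w, -, rfl⟩, h⟩ := (wk_compact (H := H) C).ultrafilter_le_nhds
    (V.map fun x => wk (g x)) (by
      rw [le_principal_iff]
      change (fun x => wk (g x)) ⁻¹' (wk '' closedBall (0:H) C) ∈ (V : Filter α)
      exact Filter.univ_mem' fun x => ⟨g x, by simpa using hg x, rfl⟩)
  exact ⟨w, h⟩

theorem exists_wmin (F : Filter E) [F.NeBot] (g : E → H) (C : ℝ) (hg : ∀ x, ‖g x‖ ≤ C) :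
    ∃ w ∈ WCl F g, ∀ w' ∈ WCl F g, ‖w‖ ≤ ‖w'‖ := by
  let A : Set (WeakDual ℂ H) := {φ | MapClusterPt φ F (fun x => wk (g x))}
  have hAc : IsClosed A := isClosed_setOfPred_clusterPt
  have hsub : A ⊆ wk '' closedBall (0:H) C := by
    intro φ hφ
    have hcl : IsClosed (wk '' closedBall (0:H) C) := by
      rw [← wk_ball]; exact WeakDual.isClosed_closedBall 0 C
    obtain ⟨V, -, hV⟩ := mapClusterPt_iff_ultrafilter.1 hφ
    exact hcl.mem_of_tendsto hV
      (Filter.univ_mem' fun x => ⟨g x, by simpa using hg x, rfl⟩)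
  have hK : IsCompact A := (wk_compact C).of_isClosed_subset hAc hsub
  have hne : A.Nonempty := by
    obtain ⟨w, hw⟩ := exists_wlim (Ultrafilter.of F) g C hg
    exact ⟨wk w, mapClusterPt_iff_ultrafilter.2 ⟨_, Ultrafilter.of_le F, hw⟩⟩
  have hlsc : LowerSemicontinuous (fun φ : WeakDual ℂ H => ‖WeakDual.toStrongDual φ‖) := by
    rw [lowerSemicontinuous_iff_isClosed_preimage]
    intro y
    convert WeakDual.isClosed_closedBall (𝕜 := ℂ) (E := H) 0 y using 1
    ext φ; simp
  obtain ⟨φ, hφ, hmin⟩ := (hlsc.lowerSemicontinuousOn A).exists_isMinOn hne hK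
  obtain ⟨w, rfl⟩ := wk_surj φ
  refine ⟨w, hφ, fun w' hw' => ?_⟩
  have := isMinOn_iff.1 hmin (wk w') hw'
  have h1 : ∀ w : H, ‖WeakDual.toStrongDual (wk w)‖ = ‖w‖ := fun w => by simp [wk]
  simpa [h1] using this

theorem wcl_closed {α : Type*} {F : Filter E} {g : E → H} {l : Filter α} [l.NeBot] {k : α → H}
    {w : H} (hk : ∀ᶠ x in l, k x ∈ WCl F g) (hw : Tendsto (fun x => wk (k x)) l (𝓝 (wk w))) :
    w ∈ WCl F g :=
  (isClosed_setOfPred_clusterPt : IsClosed {φ | MapClusterPt φ F (fun x => wk (g x))}).mem_of_tendsto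
    hw hk

theorem strong_of_weak {α : Type*} {l : Filter α} {g : α → H} {w : H} {c : ℝ}
    (hg : ∀ x, ‖g x‖ = c) (hw : Tendsto (fun x => wk (g x)) l (𝓝 (wk w))) (hc : c ≤ ‖w‖) :
    Tendsto g l (𝓝 w) := by
  rw [tendsto_iff_norm_sub_tendsto_zero]
  have h1 := (wt_iff.1 hw) w
  have h2 : Tendsto (fun x => (inner ℂ (g x) w).re) l (𝓝 (‖w‖ ^ 2)) := by
    have := (Complex.continuous_re.tendsto _).comp h1
    have h0 : (inner ℂ w w).re = ‖w‖ ^ 2 := inner_self_eq_norm_sq (𝕜 := ℂ) w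
    rw [h0] at this
    exact this
  have h3 : Tendsto (fun x => ‖w‖ ^ 2 + ‖w‖ ^ 2 - 2 * (inner ℂ (g x) w).re) l (𝓝 0) := by
    have := (h2.const_mul 2).const_sub (‖w‖ ^ 2 + ‖w‖ ^ 2)
    convert this using 2; ring
  have h4 : Tendsto (fun x => ‖g x - w‖ ^ 2) l (𝓝 0) := by
    refine squeeze_zero (fun x => by positivity) (fun x => ?_) h3
    have := @norm_sub_sq ℂ H _ _ _ (g x) w
    rw [this, hg x]
    have hc0 : 0 ≤ c := by rw [← hg x]; positivity
    have : c ^ 2 ≤ ‖w‖ ^ 2 := by gcongr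
    simp only [RCLike.re_to_complex]
    linarith
  have h5 := h4.sqrt
  simpa using h5

structure IsRep (U : E → H →ₗᵢ[ℂ] H) : Prop where
  zero : ∀ h, U 0 h = h
  add : ∀ x y h, U (x + y) h = U x (U y h)

variable {U : E → H →ₗᵢ[ℂ] H}

theorem IsRep.inner_left (hU : IsRep U) (x : E) (f g : H) :
    inner ℂ f (U x g) = inner ℂ (U (-x) f) g := by
  have : f = U x (U (-x) f) := by rw [← hU.add, add_neg_cancel, hU.zero]
  conv_lhs => rw [this]
  exact (U x).inner_map_map _ _

theorem IsRep.wlim (hU : IsRep U) {α : Type*} {l : Filter α} {g : α → H} {w : H}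
    (h : Tendsto (fun x => wk (g x)) l (𝓝 (wk w))) (y : E) :
    Tendsto (fun x => wk (U y (g x))) l (𝓝 (wk (U y w))) := by
  rw [wt_iff'] at h ⊢
  intro z
  simp only [hU.inner_left]
  exact h _

def perG (a : E → ℂ) : AddSubgroup E where
  carrier := {t | ∀ z, a (z + t) ≠ 0 ↔ a z ≠ 0}
  zero_mem' := by simp
  add_mem' := by
    intro s t hs ht z
    rw [← add_assoc, ht, hs]
  neg_mem' := by
    intro t ht z
    rw [← ht (z + -t)]; simp

theorem mem_perG {a : E → ℂ} {t : E} : t ∈ perG a ↔ ∀ z, a (z + t) ≠ 0 ↔ a z ≠ 0 := Iff.rfl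

theorem strong_coset (hU : IsRep U) {ξ η : H} {a : E → ℂ} (ha : ∀ x, a x = inner ℂ η (U x ξ))
    {ε : ℝ} (hε : 0 < ε) (hgap : ∀ x, a x ≠ 0 → ε ≤ ‖a x‖) (V : Ultrafilter E) {w : H}
    (hw : Tendsto (fun x => wk (U x ξ)) V (𝓝 (wk w))) (hn : ‖ξ‖ ≤ ‖w‖) :
    ∃ S ∈ V, ∀ y ∈ S, ∀ y' ∈ S, y' - y ∈ perG a := by
  have hs := strong_of_weak (fun x => (U x).norm_map ξ) hw hn
  have hc := (Metric.cauchy_iff.1 hs.cauchy_map).2 (ε / (‖η‖ + 1)) (by positivity)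
  obtain ⟨t, ht, hd⟩ := hc
  refine ⟨_, ht, fun y hy y' hy' z => ?_⟩
  have h1 : ‖a (z + (y' - y)) - a z‖ < ε := by
    have e1 : a (z + (y' - y)) - a z = inner ℂ η (U (z - y) (U y' ξ - U y ξ)) := by
      rw [map_sub, ← hU.add, ← hU.add, inner_sub_right, ha, ha]
      congr 4
      · abel
      · abel
    rw [e1]
    calc _ ≤ ‖η‖ * ‖U (z - y) (U y' ξ - U y ξ)‖ := norm_inner_le_norm _ _
      _ = ‖η‖ * dist (U y' ξ) (U y ξ) := by rw [(U (z-y)).norm_map, dist_eq_norm]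
      _ ≤ ‖η‖ * (ε / (‖η‖ + 1)) := by gcongr; exact (hd _ hy' _ hy).le
      _ = ε * (‖η‖ / (‖η‖ + 1)) := by ring
      _ < ε := by
        have : ‖η‖ / (‖η‖ + 1) < 1 := by rw [div_lt_one (by positivity)]; linarith
        nlinarith
  constructor
  · intro h h0
    have := hgap _ h
    rw [h0, sub_zero] at h1; linarith
  · intro h h0
    have := hgap _ h
    rw [h0, zero_sub, norm_neg] at h1; linarith

end Hilb


section Cover
open Filter Topology
variable {E : Type*} [NormedAddCommGroup E] [InnerProductSpace ℝ E] [FiniteDimensional ℝ E]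
variable {H : Type*} [NormedAddCommGroup H] [InnerProductSpace ℂ H] [CompleteSpace H]

def Cov (S : Set E) : Prop := ∃ (W : Set E) (L : Set (AddSubgroup E)), W.Finite ∧ L.Finite ∧
  (∀ P ∈ L, Ltc P) ∧ ∀ x ∈ S, ∃ P ∈ L, x ∈ W + (P : Set E)

theorem Cov.mono {S T : Set E} (h : Cov T) (hST : S ⊆ T) : Cov S := by
  obtain ⟨W, L, hW, hL, hP, hc⟩ := h
  exact ⟨W, L, hW, hL, hP, fun x hx => hc x (hST hx)⟩

theorem Cov.empty : Cov (∅ : Set E) := ⟨∅, ∅, finite_empty, finite_empty, by simp, by simp⟩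

theorem Cov.union {S T : Set E} (h : Cov S) (h' : Cov T) : Cov (S ∪ T) := by
  obtain ⟨W, L, hW, hL, hP, hc⟩ := h
  obtain ⟨W', L', hW', hL', hP', hc'⟩ := h'
  refine ⟨W ∪ W', L ∪ L', hW.union hW', hL.union hL', ?_, ?_⟩
  · rintro P (h | h)
    exacts [hP P h, hP' P h]
  · rintro x (h | h)
    · obtain ⟨P, hP, hx⟩ := hc x h
      exact ⟨P, Or.inl hP, add_subset_add_right subset_union_left hx⟩
    · obtain ⟨P, hP, hx⟩ := hc' x h
      exact ⟨P, Or.inr hP, add_subset_add_right subset_union_right hx⟩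

theorem Cov.translate {S : Set E} (h : Cov S) (y : E) : Cov {x | x + y ∈ S} := by
  obtain ⟨W, L, hW, hL, hP, hc⟩ := h
  refine ⟨(fun w => w - y) '' W, L, hW.image _, hL, hP, ?_⟩
  intro x hx
  obtain ⟨P, hPL, w, hw, p, hp, h⟩ := hc _ hx
  refine ⟨P, hPL, w - y, ⟨w, hw, rfl⟩, p, hp, ?_⟩
  simp only at h ⊢
  rw [eq_sub_of_add_eq h.symm]; abel

theorem Cov.neg {S : Set E} (h : Cov S) : Cov {x | -x ∈ S} := by
  obtain ⟨W, L, hW, hL, hP, hc⟩ := h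
  refine ⟨(fun w => -w) '' W, L, hW.image _, hL, hP, ?_⟩
  intro x hx
  obtain ⟨P, hPL, w, hw, p, hp, h⟩ := hc _ hx
  refine ⟨P, hPL, -w, ⟨w, hw, rfl⟩, -p, P.neg_mem hp, ?_⟩
  simp only at h ⊢
  rw [← neg_neg x, ← h]; abel

def coF (A : Set E) : Filter E where
  sets := {S | Cov (A \ S)}
  univ_sets := by simpa using Cov.empty
  sets_of_superset := fun h hs => h.mono (sdiff_subset_sdiff_right hs)
  inter_sets := fun {S T} h h' => (h.union h').mono (by intro x; simp; tauto)

theorem mem_coF {A S : Set E} : S ∈ coF A ↔ Cov (A \ S) := Iff.rfl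

theorem limit_gap {α : Type*} {l : Filter α} [l.NeBot] {f : α → ℂ} {z : ℂ} {ε : ℝ}
    (h : Tendsto f l (𝓝 z)) (hf : ∀ x, f x ≠ 0 → ε ≤ ‖f x‖) (hz : z ≠ 0) : ε ≤ ‖z‖ := by
  have h1 : ∀ᶠ x in l, f x ≠ 0 := h.eventually_ne hz
  exact ge_of_tendsto h.norm (h1.mono fun x hx => hf x hx)

variable {U : E → H →ₗᵢ[ℂ] H}

theorem cov_of_model (hU : IsRep U) {ξ η : H} {a : E → ℂ} (ha : ∀ x, a x = inner ℂ η (U x ξ))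
    {ε : ℝ} (hε : 0 < ε) (hgap : ∀ x, a x ≠ 0 → ε ≤ ‖a x‖) {ρ : ℝ} (hρ : 0 < ρ)
    (hsep : ∀ x y, a x ≠ 0 → a y ≠ 0 → x ≠ y → ρ ≤ ‖x - y‖)
    (hcl : ξ ∈ closure (Submodule.span ℂ (range fun z => U z η) : Set H)) :
    Cov {x | a x ≠ 0} := by
  by_contra hcon
  set A : Set E := {x | a x ≠ 0} with hA
  have hne : (coF A).NeBot := by
    refine ⟨fun h => hcon ?_⟩
    have : (∅ : Set E) ∈ coF A := by rw [h]; trivial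
    simpa using mem_coF.1 this
  obtain ⟨ξ', hξ'A, hmin⟩ := exists_wmin (coF A) (fun x => U x ξ) ‖ξ‖ (fun x => ((U x).norm_map ξ).le)
  obtain ⟨V0, hV0, hlim⟩ := mapClusterPt_iff_ultrafilter.1 hξ'A
  set a' : E → ℂ := fun y => inner ℂ η (U y ξ') with ha'
  have hlim' : ∀ y, Tendsto (fun x => a (x + y)) V0 (𝓝 (a' y)) := by
    intro y
    have := (wt_iff'.1 (hU.wlim hlim y)) η
    refine this.congr fun x => ?_
    rw [ha, ← hU.add, add_comm]
  have hgap' : ∀ y, a' y ≠ 0 → ε ≤ ‖a' y‖ := fun y hy =>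
    limit_gap (hlim' y) (fun x => hgap _) hy
  have hev : ∀ y, a' y ≠ 0 → ∀ᶠ x in V0, a (x + y) ≠ 0 := fun y hy =>
    (hlim' y).eventually_ne hy
  have hAV : A ∈ V0 := hV0 (mem_coF.2 (by simpa using Cov.empty))
  have hCV : ∀ K : Set E, Cov K → ∀ᶠ x in V0, x ∉ K := fun K hK =>
    hV0 (mem_coF.2 (hK.mono (by intro x; simp)))
  have h0 : a' 0 ≠ 0 := by
    intro h
    have h1 : Tendsto (fun x => ‖a (x + 0)‖) V0 (𝓝 ‖a' 0‖) := (hlim' 0).norm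
    have h2 : ε ≤ ‖a' 0‖ := ge_of_tendsto h1 (by
      filter_upwards [hAV] with x hx
      rw [add_zero]; exact hgap x hx)
    rw [h, norm_zero] at h2; linarith
  have hsep' : ∀ x y, a' x ≠ 0 → a' y ≠ 0 → x ≠ y → ρ ≤ ‖x - y‖ := by
    intro x y hx hy hxy
    obtain ⟨z, hz1, hz2⟩ := ((hev x hx).and (hev y hy)).exists
    have := hsep _ _ hz1 hz2 (by simpa using hxy)
    simpa using this
  have hmemA : ∀ y, a' y ≠ 0 → U y ξ' ∈ WCl (coF A) (fun x => U x ξ) := by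
    intro y hy
    refine mapClusterPt_iff_ultrafilter.2 ⟨V0.map (fun x => x + y), ?_, ?_⟩
    · intro S hS
      change ∀ᶠ x in V0, x + y ∈ S
      filter_upwards [hev y hy, hCV _ ((mem_coF.1 hS).translate y)] with x h1 h2
      by_contra h3
      exact h2 ⟨h1, h3⟩
    · change Tendsto _ (Filter.map (fun x => x + y) V0) _
      rw [tendsto_map'_iff]
      refine (hU.wlim hlim y).congr fun x => ?_
      simp only [Function.comp]
      rw [← hU.add, add_comm]
  -- coset covering
  have hcov' : Cov {x | a' x ≠ 0} := by
    have hUD : UDisc (perG a') := by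
      refine ⟨ρ, hρ, fun t ht ht0 => ?_⟩
      have h1 := (mem_perG.1 ht 0).2 h0
      rw [zero_add] at h1
      simpa using hsep' t 0 h1 h0 ht0
    obtain ⟨P, hP, hle⟩ := hUD.exists_ltc
    obtain ⟨t, ht, h⟩ := fin_cov (𝓟 {x | a' x ≠ 0}) (fun y : E => {x | x - y ∈ perG a'}) (by
      intro V hV
      have hVm : {x | a' x ≠ 0} ∈ V := le_principal_iff.1 hV
      obtain ⟨w, hw⟩ := exists_wlim V (fun x => U x ξ') ‖ξ'‖ (fun x => ((U x).norm_map ξ').le)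
      have hwA : w ∈ WCl (coF A) (fun x => U x ξ) :=
        wcl_closed (l := (V : Filter E)) (by filter_upwards [hVm] with y hy using hmemA y hy) hw
      obtain ⟨S, hS, hSp⟩ := strong_coset hU (fun x => rfl) hε hgap' V hw (hmin w hwA)
      obtain ⟨y, hy⟩ := V.nonempty_of_mem hS
      exact ⟨y, mem_of_superset hS fun x hx => hSp y hy x hx⟩)
    refine ⟨t, {P}, ht, finite_singleton _, by simpa using hP, fun x hx => ⟨P, rfl, ?_⟩⟩
    have := (mem_principal.1 h) hx
    simp only [mem_iUnion] at this
    obtain ⟨y, hy, hxy⟩ := this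
    exact ⟨y, hy, x - y, hle hxy, by simp⟩
  have hspan : ∀ g ∈ Submodule.span ℂ (range fun z => U z η),
      Cov {x | inner ℂ (U x g) ξ' ≠ 0} := by
    intro g hg
    induction hg using Submodule.span_induction with
    | mem g hg =>
      obtain ⟨z, rfl⟩ := hg
      refine ((hcov'.translate (-z)).neg).mono fun x hx => ?_
      simp only [mem_ofPred_eq] at hx ⊢
      have : -x + -z = -(x + z) := by abel
      rw [this, ha']
      simp only
      rw [hU.inner_left, neg_neg, hU.add]
      exact hx
    | zero => simpa using Cov.empty
    | add g h _ _ hg hh =>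
      refine (hg.union hh).mono fun x hx => ?_
      by_contra hn
      simp only [mem_union, mem_ofPred_eq, not_or, not_not] at hn hx
      exact hx (by rw [map_add, inner_add_left, hn.1, hn.2, add_zero])
    | smul c g _ hg =>
      refine hg.mono fun x hx => ?_
      simp only [mem_ofPred_eq] at hx ⊢
      rw [map_smul, inner_smul_left] at hx
      exact right_ne_zero_of_mul hx
  have hξ'0 : 0 < ‖ξ'‖ := by
    rw [norm_pos_iff]; intro h
    apply h0; simp [ha', h]
  obtain ⟨g, hg, hd⟩ := Metric.mem_closure_iff.1 hcl (‖ξ'‖ / 2) (by positivity)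
  have h1 : Tendsto (fun x => ‖inner ℂ (U x ξ) ξ'‖) V0 (𝓝 (‖ξ'‖ ^ 2)) := by
    have := ((wt_iff.1 hlim) ξ').norm
    rw [inner_self_eq_norm_sq_to_K] at this
    simpa using this
  have h2 : ∀ᶠ x in V0, ‖ξ'‖ ^ 2 / 2 < ‖inner ℂ (U x ξ) ξ'‖ :=
    h1.eventually_const_lt (by nlinarith)
  obtain ⟨x, hx1, hx2⟩ := (h2.and (hCV _ (hspan g hg))).exists
  simp only [mem_ofPred_eq, not_not] at hx2
  have h3 : inner ℂ (U x ξ) ξ' = inner ℂ (U x (ξ - g)) ξ' := by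
    rw [map_sub, inner_sub_left, hx2, sub_zero]
  have h4 : ‖inner ℂ (U x (ξ - g)) ξ'‖ ≤ ‖ξ - g‖ * ‖ξ'‖ := by
    have := norm_inner_le_norm (𝕜 := ℂ) (U x (ξ - g)) ξ'
    rwa [(U x).norm_map] at this
  rw [dist_eq_norm] at hd
  rw [h3] at hx1
  nlinarith

theorem lattice_of_model (hU : IsRep U) {ξ η : H} {a : E → ℂ} (ha : ∀ x, a x = inner ℂ η (U x ξ))
    {ε : ℝ} (hε : 0 < ε) (hgap : ∀ x, a x ≠ 0 → ε ≤ ‖a x‖) {ρ : ℝ} (hρ : 0 < ρ)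
    (hsep : ∀ x y, a x ≠ 0 → a y ≠ 0 → x ≠ y → ρ ≤ ‖x - y‖)
    (hap : ∀ δ > 0, ∀ᶠ τ in bohr E, ∀ x, a x ≠ 0 → ∃ y, a y ≠ 0 ∧ ‖x + τ - y‖ < δ)
    {P : AddSubgroup E} (hP : Ltc P) {l0 : E} {T0 : Set E} (hT0 : T0 ∈ bohr E)
    (hl0 : ∀ q ∈ P, q ∈ T0 → a (l0 + q) ≠ 0) :
    ∃ R ≤ P, Ltc R ∧ ∀ r ∈ R, a (l0 + r) ≠ 0 := by
  set F : Filter E := bohr E ⊓ 𝓟 (P : Set E) with hF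
  have hFne : F.NeBot := bohr_inf_neBot P
  obtain ⟨ξ', hξ'A, hmin⟩ := exists_wmin F (fun x => U x ξ) ‖ξ‖ (fun x => ((U x).norm_map ξ).le)
  obtain ⟨V0, hV0, hlim⟩ := mapClusterPt_iff_ultrafilter.1 hξ'A
  set a' : E → ℂ := fun y => inner ℂ η (U y ξ') with ha'
  have hlim' : ∀ y, Tendsto (fun x => a (x + y)) V0 (𝓝 (a' y)) := by
    intro y
    have := (wt_iff'.1 (hU.wlim hlim y)) η
    refine this.congr fun x => ?_
    rw [ha, ← hU.add, add_comm]
  have hgap' : ∀ y, a' y ≠ 0 → ε ≤ ‖a' y‖ := fun y hy =>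
    limit_gap (hlim' y) (fun x => hgap _) hy
  have hev : ∀ y, a' y ≠ 0 → ∀ᶠ x in V0, a (x + y) ≠ 0 := fun y hy =>
    (hlim' y).eventually_ne hy
  have hVb : (V0 : Filter E) ≤ bohr E := hV0.trans inf_le_left
  have hVP : ∀ᶠ x in V0, x ∈ P := le_principal_iff.1 (hV0.trans inf_le_right)
  have h0 : a' l0 ≠ 0 := by
    intro h
    have h1 : Tendsto (fun x => ‖a (x + l0)‖) V0 (𝓝 ‖a' l0‖) := (hlim' l0).norm
    have h2 : ε ≤ ‖a' l0‖ := ge_of_tendsto h1 (by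
      filter_upwards [hVb hT0, hVP] with x hx hxP
      rw [add_comm]; exact hgap _ (hl0 x hxP hx))
    rw [h, norm_zero] at h2; linarith
  have hsupp : ∀ y, a' y ≠ 0 → a y ≠ 0 := by
    intro y hy
    have hnear : ∀ δ > 0, ∃ z, a z ≠ 0 ∧ ‖y - z‖ < δ := by
      intro δ hδ
      have := hVb (bohr_neg.eventually (hap δ hδ))
      obtain ⟨x, hx1, hx2⟩ := ((hev y hy).and this).exists
      obtain ⟨z, hz, hd⟩ := hx2 _ hx1
      refine ⟨z, hz, ?_⟩
      convert hd using 2; abel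
    obtain ⟨z, hz, hd⟩ := hnear (ρ / 2) (by positivity)
    by_cases hyz : y = z
    · rwa [hyz]
    · exfalso
      have hpos : 0 < ‖y - z‖ := norm_pos_iff.2 (sub_ne_zero.2 hyz)
      obtain ⟨z', hz', hd'⟩ := hnear ‖y - z‖ hpos
      have hzz : z ≠ z' := by rintro rfl; exact lt_irrefl _ hd'
      have := hsep z z' hz hz' hzz
      have h3 : ‖z - z'‖ ≤ ‖y - z'‖ + ‖y - z‖ := by
        calc _ = ‖(y - z') - (y - z)‖ := by congr 1; abel
          _ ≤ _ := norm_sub_le _ _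
      linarith
  have hfc : ∀ V : Ultrafilter E, (V : Filter E) ≤ F →
      ∃ y : E, {x | x ∈ P ∧ x - y ∈ P ⊓ perG a'} ∈ V := by
    intro V hV
    have hVP' : ∀ᶠ x in V, x ∈ P := le_principal_iff.1 (hV.trans inf_le_right)
    obtain ⟨w, hw⟩ := exists_wlim V (fun x => U x ξ') ‖ξ'‖ (fun x => ((U x).norm_map ξ').le)
    have hwA : w ∈ WCl F (fun x => U x ξ) := by
      refine mapClusterPt_iff_frequently.2 fun s hs => ?_
      rw [frequently_iff]
      intro T hT
      obtain ⟨T1, hT1, hT1T⟩ := mem_inf_principal.1 hT |> fun h => (⟨_, h, fun x hx => hx⟩ :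
        ∃ T1 ∈ bohr E, ∀ x ∈ T1, x ∈ P → x ∈ T)
      obtain ⟨T2, hT2, hadd⟩ := bohr_add_mem hT1
      obtain ⟨s', hs's, hs'o, hws'⟩ := mem_nhds_iff.1 hs
      have e1 : ∀ᶠ x in V, wk (U x ξ') ∈ s' := hw (hs'o.mem_nhds hws')
      have e3 : ∀ᶠ x in V, x ∈ T2 := hV.trans inf_le_left hT2
      obtain ⟨q', hq's, hq'T, hq'P⟩ := (e1.and (e3.and hVP')).exists
      have e2 : ∀ᶠ x in V0, wk (U q' (U x ξ)) ∈ s' := hU.wlim hlim q' (hs'o.mem_nhds hq's)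
      have e4 : ∀ᶠ x in V0, x ∈ T2 := hVb hT2
      obtain ⟨q, hqs, hqT, hqP⟩ := (e2.and (e4.and hVP)).exists
      refine ⟨q' + q, hT1T _ (hadd _ hq'T _ hqT) (P.add_mem hq'P hqP), hs's ?_⟩
      simp only [hU.add]; exact hqs
    obtain ⟨S, hS, hSp⟩ := strong_coset hU (fun x => rfl) hε hgap' V hw (hmin w hwA)
    have hS' : S ∩ P ∈ V := inter_mem hS hVP'
    obtain ⟨y, hyS, hyP⟩ := V.nonempty_of_mem hS'
    exact ⟨y, mem_of_superset hS' fun x hx =>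
      ⟨hx.2, P.sub_mem hx.2 hyP, hSp y hyS x hx.1⟩⟩
  obtain ⟨t, ht, h⟩ := fin_cov F _ hfc
  refine ⟨P ⊓ perG a', inf_le_left, ?_, fun r hr => hsupp _ ((mem_perG.1 hr.2 l0).2 h0)⟩
  have hT := mem_inf_principal.1 h
  obtain ⟨F1, hF1, hcov⟩ := bohr_cover P hT
  refine hP.of_cover inf_le_left (hF1.add ht) fun p hp => ?_
  obtain ⟨f, hf, q, ⟨hqP, hqT⟩, rfl⟩ := hcov hp
  have := hqT hqP
  simp only [mem_iUnion] at this
  obtain ⟨y, hy, -, hxy⟩ := this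
  exact ⟨f + y, add_mem_add hf hy, q - y, hxy, by simp only; abel⟩

end Cover


section Comb
open Filter Topology
variable {E : Type*} [NormedAddCommGroup E] [InnerProductSpace ℝ E] [FiniteDimensional ℝ E]

theorem min_cover {Λ : Set E} (h : Cov Λ) : ∃ (W : Set E) (L : Finset (AddSubgroup E)),
    W.Finite ∧ (∀ P ∈ L, Ltc P) ∧ (∀ x ∈ Λ, ∃ P ∈ L, x ∈ W + (P : Set E)) ∧
    ∀ P ∈ L, ∀ Q ∈ L, P ≠ Q → ¬ Coc ((P ⊓ Q : AddSubgroup E) : Set E) := by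
  classical
  obtain ⟨W, L, hW, hL, hP, hc⟩ := h
  lift L to Finset (AddSubgroup E) using hL
  refine ⟨W, ?_⟩
  induction hn : L.card using Nat.strong_induction_on generalizing L with
  | _ n ih =>
    by_cases hbad : ∃ P ∈ L, ∃ Q ∈ L, P ≠ Q ∧ Coc ((P ⊓ Q : AddSubgroup E) : Set E)
    · obtain ⟨P, hPL, Q, hQL, hne, hco⟩ := hbad
      have hQL' : Q ∈ L.erase P := Finset.mem_erase.2 ⟨hne.symm, hQL⟩
      refine ih _ ?_ (insert (P ⊔ Q) ((L.erase P).erase Q)) ?_ ?_ rfl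
      · have h1 := Finset.card_insert_le (P ⊔ Q) ((L.erase P).erase Q)
        have h2 := Finset.card_erase_add_one hQL'
        have h3 := Finset.card_erase_add_one hPL
        omega
      · intro R hR
        simp only [Finset.coe_insert, mem_insert_iff, Finset.mem_coe] at hR
        rcases hR with rfl | hR
        · exact (hP P hPL).sup (hP Q hQL) hco
        · exact hP R (Finset.mem_of_mem_erase (Finset.mem_of_mem_erase hR))
      · intro x hx
        obtain ⟨R, hR, hxR⟩ := hc x hx
        by_cases h1 : R = P
        · exact ⟨P ⊔ Q, by simp, add_subset_add_left (by rw [h1]; exact SetLike.coe_subset_coe.2 le_sup_left) hxR⟩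
        by_cases h2 : R = Q
        · exact ⟨P ⊔ Q, by simp, add_subset_add_left (by rw [h2]; exact SetLike.coe_subset_coe.2 le_sup_right) hxR⟩
        · refine ⟨R, ?_, hxR⟩
          simp only [Finset.coe_insert, mem_insert_iff, Finset.mem_coe]
          exact Or.inr (Finset.mem_erase.2 ⟨h2, Finset.mem_erase.2 ⟨h1, hR⟩⟩)
    · push Not at hbad
      exact ⟨L, hW, hP, hc, fun P hP Q hQ h => hbad P hP Q hQ h⟩

def LowS (W : Set E) (L : Finset (AddSubgroup E)) : Set E :=
  {x | ∃ P ∈ L, ∃ Q ∈ L, P ≠ Q ∧ x ∈ W + (P : Set E) ∧ x ∈ W + (Q : Set E)}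

theorem low_coc {W : Set E} (hW : W.Finite) {L : Finset (AddSubgroup E)}
    (hmin : ∀ P ∈ L, ∀ Q ∈ L, P ≠ Q → ¬ Coc ((P ⊓ Q : AddSubgroup E) : Set E)) :
    ¬ Coc (LowS W L) := by
  classical
  lift W to Finset E using hW
  let s : Finset ((AddSubgroup E × AddSubgroup E) × (E × E)) :=
    ((L ×ˢ L).filter fun p => p.1 ≠ p.2) ×ˢ (W ×ˢ W)
  let G : ((AddSubgroup E × AddSubgroup E) × (E × E)) → Set E := fun i =>
    {x | x - i.2.1 ∈ i.1.1 ∧ x - i.2.2 ∈ i.1.2}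
  have hx0 : ∀ i, ∃ x0, ∀ x ∈ G i, x0 ∈ G i := by
    intro i
    by_cases h : (G i).Nonempty
    · exact ⟨h.some, fun _ _ => h.some_mem⟩
    · exact ⟨0, fun x hx => absurd ⟨x, hx⟩ h⟩
  choose x0 hx0 using hx0
  intro hco
  refine low_not_coc s x0 (fun i => Submodule.span ℝ ((i.1.1 ⊓ i.1.2 : AddSubgroup E) : Set E))
    ?_ (hco.mono ?_)
  · intro i hi htop
    simp only [s, Finset.mem_product, Finset.mem_filter] at hi
    exact hmin _ hi.1.1.1 _ hi.1.1.2 hi.1.2 (coc_of_span htop)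
  · rintro x ⟨P, hP, Q, hQ, hne, ⟨w, hw, p, hp, rfl⟩, ⟨w', hw', q, hq, hh⟩⟩
    simp only at hh
    have hi : ((P, Q), (w, w')) ∈ s := by
      simp only [s, Finset.mem_product, Finset.mem_filter]
      exact ⟨⟨⟨hP, hQ⟩, hne⟩, hw, hw'⟩
    have hG : w + p ∈ G ((P, Q), (w, w')) := by
      refine ⟨by simpa using hp, ?_⟩
      rw [← hh]; simpa using hq
    have hG0 := hx0 _ _ hG
    simp only [mem_iUnion]
    refine ⟨_, hi, w + p - x0 ((P, Q), (w, w')), Submodule.subset_span ⟨?_, ?_⟩, by simp⟩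
    · have e : w + p - x0 ((P, Q), (w, w')) = (w + p - w) - (x0 ((P, Q), (w, w')) - w) := by abel
      rw [e]; exact P.sub_mem hG.1 hG0.1
    · have e : w + p - x0 ((P, Q), (w, w')) = (w + p - w') - (x0 ((P, Q), (w, w')) - w') := by abel
      rw [e]; exact Q.sub_mem hG.2 hG0.2

structure LamH (Λ : Set E) (ρ : ℝ) : Prop where
  hρ : 0 < ρ
  sep : ∀ x ∈ Λ, ∀ y ∈ Λ, ‖x - y‖ < ρ → x = y
  ap : ∀ δ > 0, ∀ᶠ τ in bohr E, ∀ x ∈ Λ, ∃ y ∈ Λ, ‖x + τ - y‖ < δ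
  lat : ∀ P : AddSubgroup E, Ltc P → ∀ l0 : E, ∀ T0 ∈ bohr E,
    (∀ q ∈ P, q ∈ T0 → l0 + q ∈ Λ) → ∃ R ≤ P, Ltc R ∧ ∀ r ∈ R, l0 + r ∈ Λ

theorem sep_diff {P : AddSubgroup E} (hP : Ltc P) {K : Set E} (hK : K.Finite) :
    ∃ ρ > (0:ℝ), ∀ e ∈ K + (P : Set E), ‖e‖ < ρ → e = 0 := by
  obtain ⟨ρ, hρ, h⟩ := udisc_of_locfin (hP.1.finite_add hK 0 1)
  refine ⟨ρ, hρ, fun e he hlt => ?_⟩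
  by_contra h0
  exact absurd (h e he h0) (not_le.2 hlt)

variable {Λ : Set E} {ρ : ℝ} {W : Set E} {L : Finset (AddSubgroup E)}

def Good (Λ W : Set E) (P : AddSubgroup E) : Set E :=
  {x | x ∈ W + (P : Set E) ∧ ∃ R ≤ P, Ltc R ∧ ∀ r ∈ R, x + r ∈ Λ}

theorem generic_good (hΛ : LamH Λ ρ) (hW : W.Finite) (hL : ∀ P ∈ L, Ltc P)
    (hc : ∀ x ∈ Λ, ∃ P ∈ L, x ∈ W + (P : Set E)) {l0 : E} (hl : l0 ∈ Λ) (hlow : l0 ∉ LowS W L) :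
    ∃ P ∈ L, l0 ∈ Good Λ W P := by
  classical
  obtain ⟨P, hPL, hlP⟩ := hc l0 hl
  refine ⟨P, hPL, hlP, ?_⟩
  have hsd : ∀ Q : AddSubgroup E, ∃ ρ > (0:ℝ), Q ∈ L →
      ∀ e ∈ (W - {l0}) + (Q : Set E), ‖e‖ < ρ → e = 0 := by
    intro Q
    by_cases hQ : Q ∈ L
    · obtain ⟨ρ, h1, h2⟩ := sep_diff (hL Q hQ) (hW.sub (finite_singleton l0))
      exact ⟨ρ, h1, fun _ => h2⟩
    · exact ⟨1, one_pos, fun h => absurd h hQ⟩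
  choose σ hσ hσ' using hsd
  have hT : ∀ᶠ τ in bohr E, ∀ Q ∈ L, (∀ x ∈ Λ, ∃ y ∈ Λ, ‖x + τ - y‖ < σ Q / 2) ∧
      ∃ p ∈ Q, ‖τ - p‖ < σ Q / 2 := by
    rw [eventually_all_finset]
    intro Q hQ
    exact (hΛ.ap _ (half_pos (hσ Q))).and (bohr_near (hL Q hQ) (half_pos (hσ Q)))
  refine hΛ.lat P (hL P hPL) l0 _ hT ?_
  intro q hqP hqT
  -- choose the smallest scale
  obtain ⟨Q0, hQ0, hmin⟩ := L.exists_min_image σ ⟨P, hPL⟩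
  obtain ⟨l', hl', hd⟩ := (hqT Q0 hQ0).1 l0 hl
  obtain ⟨Q, hQL, w, hw, u, hu, hl'e⟩ := hc l' hl'
  simp only at hl'e
  obtain ⟨p, hpQ, hpd⟩ := (hqT Q hQL).2
  have e0 : l' - p - l0 = 0 := by
    refine hσ' Q hQL _ ⟨w - l0, ⟨w, hw, l0, rfl, rfl⟩, u - p, Q.sub_mem hu hpQ, ?_⟩ ?_
    · simp only; rw [← hl'e]; abel
    · calc ‖l' - p - l0‖ = ‖(q - p) - (l0 + q - l')‖ := by congr 1; abel
        _ ≤ ‖q - p‖ + ‖l0 + q - l'‖ := norm_sub_le _ _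
        _ < σ Q / 2 + σ Q / 2 := by
          have := hmin Q hQL
          linarith
        _ = σ Q := by ring
  have hlQ : l0 ∈ W + (Q : Set E) := by
    refine ⟨w, hw, u - p, Q.sub_mem hu hpQ, ?_⟩
    simp only
    rw [sub_eq_zero] at e0
    rw [← e0, ← hl'e]; abel
  have hQP : Q = P := by
    by_contra hne
    exact hlow ⟨Q, hQL, P, hPL, hne, hlQ, hlP⟩
  subst hQP
  have e1 : l' - q - l0 = 0 := by
    refine hσ' Q hQL _ ⟨w - l0, ⟨w, hw, l0, rfl, rfl⟩, u - q, Q.sub_mem hu hqP, ?_⟩ ?_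
    · simp only; rw [← hl'e]; abel
    · have h1 := hmin Q hQL
      have h2 := hσ Q0
      calc ‖l' - q - l0‖ = ‖l0 + q - l'‖ := by rw [← norm_neg]; congr 1; abel
        _ < σ Q := by linarith
  have : l0 + q = l' := by
    rw [sub_eq_zero] at e1; rw [← e1]; abel
  rw [this]; exact hl'

theorem drift (hΛ : LamH Λ ρ) {R R' : AddSubgroup E} (hR : Ltc R) (hR' : Ltc R') {l l' q : E}
    {η : ℝ} (hη : 0 < η) (hηρ : 10 * η ≤ ρ)
    (h1 : ∀ r ∈ R, l + r ∈ Λ) (h2 : ∀ r ∈ R', l' + r ∈ Λ)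
    (hq : ∀ x ∈ Λ, ∃ y ∈ Λ, ‖x + q - y‖ < η) (hd : ‖l + q - l'‖ < η) :
    Coc ((R ⊓ R' : AddSubgroup E) : Set E) := by
  classical
  by_contra hco
  obtain ⟨r, hr, r', hr', hne, hlt⟩ := exists_close hR hR' hco hη
  have hpos : 0 < ‖r - r'‖ := norm_pos_iff.2 (sub_ne_zero.2 hne)
  let c : ℕ → E := fun k => (l + q - l') + k • (r - r')
  have hex : ∃ k, 2 * η ≤ ‖c k‖ := by
    obtain ⟨k, hk⟩ := exists_nat_gt (3 * η / ‖r - r'‖)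
    refine ⟨k, ?_⟩
    rw [div_lt_iff₀ hpos] at hk
    have h3 : ‖k • (r - r')‖ = k * ‖r - r'‖ := by
      rw [← Nat.cast_smul_eq_nsmul ℝ, norm_smul]; simp
    have h4 : ‖k • (r - r')‖ ≤ ‖c k‖ + ‖l + q - l'‖ := by
      calc _ = ‖c k - (l + q - l')‖ := by congr 1; simp only [c]; abel
        _ ≤ _ := norm_sub_le _ _
    linarith
  let k := Nat.find hex
  have hk : 2 * η ≤ ‖c k‖ := Nat.find_spec hex
  have hk3 : ‖c k‖ < 3 * η := by
    rcases Nat.eq_zero_or_pos k with h0 | hp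
    · rw [h0] at hk
      simp only [c, zero_smul, add_zero] at hk
      linarith
    · have hm : ¬ 2 * η ≤ ‖c (k - 1)‖ := Nat.find_min hex (Nat.sub_lt hp one_pos)
      have : c k = c (k - 1) + (r - r') := by
        simp only [c]
        rw [add_assoc, ← succ_nsmul, Nat.sub_add_cancel hp]
      rw [this]
      have := norm_add_le (c (k - 1)) (r - r')
      linarith
  obtain ⟨y, hy, hyd⟩ := hq (l + k • r) (h1 _ (R.nsmul_mem hr k))
  have hz := h2 _ (R'.nsmul_mem hr' k)
  have hcy : ‖c k - (y - (l' + k • r'))‖ < η := by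
    convert hyd using 2
    simp only [c, smul_sub]; abel
  have h5 : ‖y - (l' + k • r')‖ < ρ := by
    have : ‖y - (l' + k • r')‖ ≤ ‖c k‖ + ‖c k - (y - (l' + k • r'))‖ := by
      calc _ = ‖c k - (c k - (y - (l' + k • r')))‖ := by congr 1; abel
        _ ≤ _ := norm_sub_le _ _
    linarith
  have h6 := hΛ.sep _ hy _ hz h5
  rw [h6, sub_self, sub_zero] at hcy
  linarith

theorem good_period (hΛ : LamH Λ ρ) (hW : W.Finite) (hL : ∀ P ∈ L, Ltc P)
    (hc : ∀ x ∈ Λ, ∃ P ∈ L, x ∈ W + (P : Set E))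
    (hmin : ∀ P ∈ L, ∀ Q ∈ L, P ≠ Q → ¬ Coc ((P ⊓ Q : AddSubgroup E) : Set E))
    {P : AddSubgroup E} (hP : P ∈ L) :
    ∀ᶠ q in bohr E, q ∈ P → ∀ l ∈ Good Λ W P, l + q ∈ Λ := by
  obtain ⟨σ, hσ, hσ'⟩ := sep_diff (hL P hP) (hW.sub hW)
  obtain ⟨η, hη, hη1, hη2⟩ : ∃ η > 0, 10 * η ≤ ρ ∧ η ≤ σ := by
    refine ⟨min (ρ / 10) σ, lt_min (by linarith [hΛ.hρ]) hσ, ?_, min_le_right _ _⟩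
    have := min_le_left (ρ / 10) σ; linarith
  filter_upwards [hΛ.ap η hη] with q hq hqP l hl
  obtain ⟨⟨w, hw, p, hp, hwp⟩, R, hRP, hR, hlR⟩ := hl
  simp only at hwp
  have hlΛ : l ∈ Λ := by simpa using hlR 0 R.zero_mem
  obtain ⟨lq, hlq, hlqd⟩ := hq l hlΛ
  set e := lq - l - q with he
  by_cases he0 : e = 0
  · have : l + q = lq := by
      rw [he, sub_sub, sub_eq_zero] at he0; exact he0.symm
    rw [this]; exact hlq
  exfalso
  have hepos : 0 < ‖e‖ := norm_pos_iff.2 he0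
  have heη : ‖e‖ < η := by
    have h1 : e = -(l + q - lq) := by rw [he]; abel
    rw [h1, norm_neg]; exact hlqd
  have hT := hΛ.ap ‖e‖ hepos
  have hcoc := bohr_coc_lat hR hT
  -- find r with w_r generic
  have key : ∃ r ∈ R, (∀ x ∈ Λ, ∃ y ∈ Λ, ‖x + r - y‖ < ‖e‖) ∧
      ∃ y ∈ Λ, ‖l + r + q - y‖ < η ∧ y ∉ LowS W L := by
    by_contra! hcon
    apply low_coc hW hmin
    obtain ⟨B, hB⟩ := hcoc
    refine ⟨B + η, fun x => ?_⟩
    obtain ⟨r, ⟨hrR, hrT⟩, hrd⟩ := hB (x - l - q)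
    obtain ⟨y, hy, hyd⟩ := hq (l + r) (hlR r hrR)
    have : ‖l + r + q - y‖ < η := by convert hyd using 2
    refine ⟨y, hcon r hrR hrT y hy this, ?_⟩
    calc ‖x - y‖ = ‖(x - l - q - r) + (l + r + q - y)‖ := by congr 1; abel
      _ ≤ ‖x - l - q - r‖ + ‖l + r + q - y‖ := norm_add_le _ _
      _ ≤ B + η := by linarith
  obtain ⟨r, hrR, hrT, y, hy, hyd, hylow⟩ := key
  obtain ⟨v, hv, hvd⟩ := hrT lq hlq
  have hyv : y = v := by
    apply hΛ.sep y hy v hv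
    calc ‖y - v‖ = ‖(lq + r - v) - (l + r + q - y) - e‖ := by congr 1; rw [he]; abel
      _ ≤ ‖(lq + r - v) - (l + r + q - y)‖ + ‖e‖ := norm_sub_le _ _
      _ ≤ ‖lq + r - v‖ + ‖l + r + q - y‖ + ‖e‖ := by gcongr; exact norm_sub_le _ _
      _ < ρ := by linarith
  subst hyv
  obtain ⟨P', hP', hyG⟩ := generic_good hΛ hW hL hc hy hylow
  obtain ⟨⟨w', hw', p', hp', hwp'⟩, R', hR'P, hR', hyR⟩ := hyG
  simp only at hwp'
  have hco := drift hΛ hR hR' (l := l + r) hη hη1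
    (fun s hs => by rw [add_assoc]; exact hlR _ (R.add_mem hrR hs)) hyR hq hyd
  have hPP : P' = P := by
    by_contra hne
    refine hmin P' hP' P hP hne (hco.mono ?_)
    rintro x ⟨hx1, hx2⟩
    exact ⟨hR'P hx2, hRP hx1⟩
  subst hPP
  have h0 : y - l - r - q = 0 := by
    refine hσ' _ ⟨w' - w, sub_mem_sub hw' hw, p' - p - r - q, ?_, ?_⟩ ?_
    · exact P'.sub_mem (P'.sub_mem (P'.sub_mem hp' hp) (hRP hrR)) hqP
    · simp only; rw [← hwp, ← hwp']; abel
    · calc _ = ‖l + r + q - y‖ := by rw [← norm_neg]; congr 1; abel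
        _ < σ := by linarith
  have h1 : lq + r - y = e := by
    rw [he]
    have : y = l + r + q := by
      rw [sub_sub, sub_sub, sub_eq_zero] at h0; rw [h0]; abel
    rw [this]; abel
  rw [h1] at hvd
  exact lt_irrefl _ hvd

theorem comb_main (hΛ : LamH Λ ρ) (hcov : Cov Λ) :
    ∃ C : Set (Set E), C.Finite ∧
      (∀ c ∈ C, ∃ (v : E) (P : AddSubgroup E), Ltc P ∧ c = (fun y => v + y) '' (P : Set E)) ∧
      Λ = ⋃₀ C ∧ ∀ c ∈ C, ∀ c' ∈ C, c ≠ c' → Disjoint c c' := by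
  classical
  obtain ⟨W, L, hW, hL, hc, hmin⟩ := min_cover hcov
  have hgp : ∀ᶠ q in bohr E, ∀ P ∈ L, q ∈ P → ∀ l ∈ Good Λ W P, l + q ∈ Λ := by
    rw [eventually_all_finset]
    intro P hP
    exact good_period hΛ hW hL hc hmin hP
  have hgp2 := hgp.and (bohr_neg.eventually hgp)
  set T : Set E := {q | (∀ P ∈ L, q ∈ P → ∀ l ∈ Good Λ W P, l + q ∈ Λ) ∧
    (∀ P ∈ L, -q ∈ P → ∀ l ∈ Good Λ W P, l + -q ∈ Λ)} with hTdef
  have hT : T ∈ bohr E := hgp2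
  let S : AddSubgroup E → AddSubgroup E := fun P => AddSubgroup.closure ((P : Set E) ∩ T)
  have hSP : ∀ P, S P ≤ P := fun P => (AddSubgroup.closure_le P).2 inter_subset_left
  have hScov : ∀ P : AddSubgroup E, ∃ F : Set E, F.Finite ∧ (P : Set E) ⊆ F + (S P : Set E) := by
    intro P
    obtain ⟨F, hF, h⟩ := bohr_cover P hT
    exact ⟨F, hF, h.trans (add_subset_add_left AddSubgroup.subset_closure)⟩
  have hS : ∀ P ∈ L, Ltc (S P) := by
    intro P hP
    obtain ⟨F, hF, h⟩ := hScov P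
    exact (hL P hP).of_cover (hSP P) hF h
  have hGadd : ∀ P ∈ L, ∀ q ∈ P, (∀ l ∈ Good Λ W P, l + q ∈ Λ) → ∀ l ∈ Good Λ W P,
      l + q ∈ Good Λ W P := by
    intro P hP q hqP hq l hl
    obtain ⟨⟨w, hw, p, hp, hwp⟩, R, hRP, hR, hlR⟩ := hl
    simp only at hwp
    refine ⟨⟨w, hw, p + q, P.add_mem hp hqP, by simp only; rw [← hwp, add_assoc]⟩, R, hRP, hR, ?_⟩
    intro r hr
    have : l + r ∈ Good Λ W P := by
      refine ⟨⟨w, hw, p + r, P.add_mem hp (hRP hr), by simp only; rw [← hwp, add_assoc]⟩,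
        R, hRP, hR, fun s hs => ?_⟩
      rw [add_assoc]; exact hlR _ (R.add_mem hr hs)
    have := hq _ this
    rwa [add_right_comm]
  have hGS : ∀ P ∈ L, ∀ s ∈ S P, ∀ l ∈ Good Λ W P, l + s ∈ Good Λ W P := by
    intro P hP s hs
    induction hs using AddSubgroup.closure_induction'' with
    | zero => simp
    | mem x hx => exact hGadd P hP x hx.1 (hx.2.1 P hP hx.1)
    | neg_mem x hx => exact hGadd P hP (-x) (P.neg_mem hx.1) (hx.2.2 P hP (P.neg_mem hx.1))
    | add x y _ _ hx hy =>
      intro l hl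
      rw [← add_assoc]; exact hy _ (hx l hl)
  have hGΛ : ∀ P, Good Λ W P ⊆ Λ := by
    rintro P l ⟨-, R, -, -, h⟩
    simpa using h 0 R.zero_mem
  have hall : ∀ l ∈ Λ, ∃ P ∈ L, l ∈ Good Λ W P := by
    intro l hl
    have hρ2 : 0 < ρ / 2 := half_pos hΛ.hρ
    have hev : ∀ᶠ τ in bohr E, (∀ x ∈ Λ, ∃ y ∈ Λ, ‖x + τ - y‖ < ρ / 2) ∧
        ∀ P ∈ L, ∃ p ∈ S P, ‖τ - p‖ < ρ / 2 := by
      refine (hΛ.ap _ hρ2).and ?_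
      rw [eventually_all_finset]
      exact fun P hP => bohr_near (hS P hP) hρ2
    have key : ∃ τ, (∀ P ∈ L, ∃ p ∈ S P, ‖τ - p‖ < ρ / 2) ∧
        ∃ y ∈ Λ, ‖l + τ - y‖ < ρ / 2 ∧ y ∉ LowS W L := by
      by_contra! hcon
      apply low_coc hW hmin
      obtain ⟨B, hB⟩ := bohr_coc hev
      refine ⟨B + ρ / 2, fun x => ?_⟩
      obtain ⟨τ, hτ, hτd⟩ := hB (x - l)
      obtain ⟨y, hy, hyd⟩ := hτ.1 l hl
      refine ⟨y, hcon τ hτ.2 y hy hyd, ?_⟩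
      calc ‖x - y‖ = ‖(x - l - τ) + (l + τ - y)‖ := by congr 1; abel
        _ ≤ ‖x - l - τ‖ + ‖l + τ - y‖ := norm_add_le _ _
        _ ≤ B + ρ / 2 := by linarith
    obtain ⟨τ, hτS, y, hy, hyd, hylow⟩ := key
    obtain ⟨P, hP, hyG⟩ := generic_good hΛ hW hL hc hy hylow
    obtain ⟨s, hs, hsd⟩ := hτS P hP
    have h1 := hGS P hP (-s) ((S P).neg_mem hs) y hyG
    have h2 : l = y + -s := by
      apply hΛ.sep l hl _ (hGΛ P h1)
      calc ‖l - (y + -s)‖ = ‖(l + τ - y) - (τ - s)‖ := by congr 1; abel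
        _ ≤ ‖l + τ - y‖ + ‖τ - s‖ := norm_sub_le _ _
        _ < ρ := by linarith
    exact ⟨P, hP, h2 ▸ h1⟩
  have hdisj : ∀ P ∈ L, ∀ Q ∈ L, P ≠ Q → ∀ l, l ∈ Good Λ W P → l ∈ Good Λ W Q → False := by
    intro P hP Q hQ hne l hlP hlQ
    have hnc : ¬ Coc ((S P ⊓ S Q : AddSubgroup E) : Set E) := fun h =>
      hmin P hP Q hQ hne (h.mono fun x hx => ⟨hSP P hx.1, hSP Q hx.2⟩)
    obtain ⟨r, hr, r', hr', hrr, hd⟩ := exists_close (hS P hP) (hS Q hQ) hnc hΛ.hρ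
    have := hΛ.sep _ (hGΛ _ (hGS P hP r hr l hlP)) _ (hGΛ _ (hGS Q hQ r' hr' l hlQ))
      (by simpa using hd)
    exact hrr (by simpa using this)
  let cs : E → AddSubgroup E → Set E := fun v P => (fun y => v + y) '' (S P : Set E)
  have hcs : ∀ v v' P, v' - v ∈ S P → cs v P = cs v' P := by
    intro v v' P h
    ext x
    constructor
    · rintro ⟨s, hs, rfl⟩
      exact ⟨s - (v' - v), (S P).sub_mem hs h, by simp only; abel⟩
    · rintro ⟨s, hs, rfl⟩
      exact ⟨s + (v' - v), (S P).add_mem hs h, by simp only; abel⟩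
  refine ⟨{c | ∃ P ∈ L, ∃ l ∈ Good Λ W P, c = cs l P}, ?_, ?_, ?_, ?_⟩
  · choose F hF hFc using hScov
    refine ((L.finite_toSet).biUnion (t := fun P => (fun v => cs v P) '' (W + F P))
      (fun P _ => (hW.add (hF P)).image _)).subset ?_
    rintro c ⟨P, hP, l, hl, rfl⟩
    simp only [mem_iUnion]
    obtain ⟨⟨w, hw, p, hp, hwp⟩, -⟩ := hl
    obtain ⟨f, hf, s, hs, hfs⟩ := hFc P hp
    simp only at hwp hfs
    refine ⟨P, hP, w + f, add_mem_add hw hf, ?_⟩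
    apply hcs
    rw [← hwp, ← hfs]
    simpa using hs
  · rintro c ⟨P, hP, l, hl, rfl⟩
    exact ⟨l, S P, hS P hP, rfl⟩
  · ext x
    constructor
    · intro hx
      obtain ⟨P, hP, hxG⟩ := hall x hx
      exact ⟨cs x P, ⟨P, hP, x, hxG, rfl⟩, 0, (S P).zero_mem, by simp⟩
    · rintro ⟨c, ⟨P, hP, l, hl, rfl⟩, s, hs, rfl⟩
      exact hGΛ P (hGS P hP s hs l hl)
  · rintro c ⟨P, hP, l, hl, rfl⟩ c' ⟨Q, hQ, m, hm, rfl⟩ hne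
    rw [Set.disjoint_left]
    rintro x ⟨s, hs, rfl⟩ ⟨t, ht, hst⟩
    simp only at hst
    have h1 := hGS P hP s hs l hl
    have h2 := hGS Q hQ t ht m hm
    rw [hst] at h2
    by_cases hPQ : P = Q
    · subst hPQ
      apply hne
      apply hcs
      have : m - l = s - t := by
        rw [sub_eq_sub_iff_add_eq_add, hst]; abel
      rw [this]; exact (S P).sub_mem hs ht
    · exact hdisj P hP Q hQ hPQ _ h1 h2

end Comb


section Model
open Filter Topology

theorem complete_model {E : Type} [NormedAddCommGroup E]
    {V : Type} [SeminormedAddCommGroup V] [InnerProductSpace ℂ V] (T : E → V →ₗᵢ[ℂ] V)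
    (hT0 : ∀ v, T 0 v = v) (hTa : ∀ x y v, T (x + y) v = T x (T y v)) (l : V →L[ℂ] ℂ) :
    ∃ (H : Type) (_ : NormedAddCommGroup H) (_ : InnerProductSpace ℂ H) (_ : CompleteSpace H)
      (U : E → H →ₗᵢ[ℂ] H) (ι : V →ₗ[ℂ] H) (ξ : H), IsRep U ∧ DenseRange ι ∧
      (∀ x v, U x (ι v) = ι (T x v)) ∧ ∀ v, inner ℂ (ι v) ξ = star (l v) := by
  let H := UniformSpace.Completion V
  let U0 : E → H →L[ℂ] H := fun x => (T x).toContinuousLinearMap.completion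
  have hU0 : ∀ x (v : V), U0 x (v : H) = ((T x v : V) : H) := fun x v =>
    ContinuousLinearMap.completion_apply_coe _ _
  have hd : DenseRange (fun v : V => (v : H)) := UniformSpace.Completion.denseRange_coe
  have hn : ∀ x (h : H), ‖U0 x h‖ = ‖h‖ := by
    intro x h
    have : (fun h => ‖U0 x h‖) = fun h : H => ‖h‖ := by
      refine hd.equalizer (U0 x).continuous.norm continuous_norm ?_
      funext v
      simp only [Function.comp, hU0]
      change ‖((T x v : V) : UniformSpace.Completion V)‖ = ‖(v : UniformSpace.Completion V)‖
      rw [UniformSpace.Completion.norm_coe, UniformSpace.Completion.norm_coe, (T x).norm_map]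
    exact congrFun this h
  let U : E → H →ₗᵢ[ℂ] H := fun x => ⟨(U0 x : H →ₗ[ℂ] H), hn x⟩
  have hU : ∀ x (v : V), U x (v : H) = ((T x v : V) : H) := hU0
  let ι : V →L[ℂ] H := UniformSpace.Completion.toComplL
  have hι : ∀ v, ι v = (v : H) := fun v => rfl
  let L : H →L[ℂ] ℂ := l.extend ι
  have hL : ∀ v : V, L (v : H) = l v := fun v =>
    ContinuousLinearMap.extend_eq l hd (UniformSpace.Completion.isUniformInducing_coe V) v
  refine ⟨H, inferInstance, inferInstance, inferInstance, U, ι, (InnerProductSpace.toDual ℂ H).symm L,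
    ⟨?_, ?_⟩, hd, hU, ?_⟩
  · intro h
    have : (fun h => U 0 h) = fun h : H => h := by
      refine hd.equalizer (U 0).continuous continuous_id ?_
      funext v
      simp only [Function.comp, hU, hT0]
    exact congrFun this h
  · intro x y h
    have : (fun h => U (x + y) h) = fun h : H => U x (U y h) := by
      refine hd.equalizer (U _).continuous ((U x).continuous.comp (U y).continuous) ?_
      funext v
      simp only [Function.comp, hU, hTa]
    exact congrFun this h
  · intro v
    rw [← inner_conj_symm, InnerProductSpace.toDual_symm_apply]
    exact congrArg star (hL v)

def uF : Filter ℕ := (hyperfilter ℕ : Filter ℕ)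

instance : NeBot uF := by unfold uF; infer_instance

theorem uF_le : uF ≤ atTop := by
  unfold uF; rw [← Nat.cofinite_eq_atTop]; exact hyperfilter_le_cofinite

theorem uF_lim {s : ℕ → ℂ} {M : ℝ} (h : ∀ n, ‖s n‖ ≤ M) :
    Tendsto s uF (𝓝 (limUnder uF s)) := by
  apply tendsto_nhds_limUnder
  have hc := isCompact_closedBall (0:ℂ) M
  obtain ⟨z, -, hz⟩ := hc.ultrafilter_le_nhds ((hyperfilter ℕ).map s) (by
    rw [le_principal_iff]
    change s ⁻¹' _ ∈ (hyperfilter ℕ : Filter ℕ)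
    exact Filter.univ_mem' (fun n => by simpa using h n))
  exact ⟨z, hz⟩

theorem gns_aux {E : Type} [NormedAddCommGroup E] {K : Type} [NormedAddCommGroup K]
    [InnerProductSpace ℂ K] {V : Type} [AddCommGroup V] [Module ℂ V] (Φ : ℕ → V →ₗ[ℂ] K)
    (θ : ℕ → K) (C : ℝ) (hb : ∀ v : V, ∃ M : ℝ, ∀ n, ‖Φ n v‖ ≤ M)
    (hθ : ∀ n, ‖θ n‖ ≤ C) (T0 : E → V →ₗ[ℂ] V)
    (hT0 : ∀ v, T0 0 v = v) (hTa : ∀ x y v, T0 (x + y) v = T0 x (T0 y v))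
    (hTn : ∀ n x v, inner ℂ (Φ n (T0 x v)) (Φ n (T0 x v)) = inner ℂ (Φ n v) (Φ n v))
    (l0 : V →ₗ[ℂ] ℂ) (hl0 : ∀ v, Tendsto (fun n => inner ℂ (θ n) (Φ n v)) atTop (𝓝 (l0 v))) :
    ∃ (H : Type) (_ : NormedAddCommGroup H) (_ : InnerProductSpace ℂ H) (_ : CompleteSpace H)
      (U : E → H →ₗᵢ[ℂ] H) (ι : V →ₗ[ℂ] H) (ξ : H), IsRep U ∧ DenseRange ι ∧
      (∀ x v, U x (ι v) = ι (T0 x v)) ∧ ∀ v, inner ℂ (ι v) ξ = star (l0 v) := by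
  let ip : V → V → ℂ := fun v w => limUnder uF (fun n => inner ℂ (Φ n v) (Φ n w))
  have hip : ∀ v w, Tendsto (fun n => inner ℂ (Φ n v) (Φ n w)) uF (𝓝 (ip v w)) := by
    intro v w
    obtain ⟨M, hM⟩ := hb v
    obtain ⟨M', hM'⟩ := hb w
    refine uF_lim (M := M * M') fun n => (norm_inner_le_norm _ _).trans ?_
    exact mul_le_mul (hM n) (hM' n) (norm_nonneg _) ((norm_nonneg _).trans (hM n))
  let core : PreInnerProductSpace.Core ℂ V :=
    { inner := ip
      conj_inner_symm := fun v w => by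
        refine tendsto_nhds_unique ?_ (hip v w)
        have := (Complex.continuous_conj.tendsto _).comp (hip w v)
        refine this.congr fun n => ?_
        simp
      re_inner_nonneg := fun v => by
        have := (Complex.continuous_re.tendsto _).comp (hip v v)
        refine ge_of_tendsto this (Eventually.of_forall fun n => ?_)
        exact inner_self_nonneg (𝕜 := ℂ)
      add_left := fun u v w => by
        refine tendsto_nhds_unique (hip (u + v) w) ?_
        refine ((hip u w).add (hip v w)).congr fun n => ?_
        rw [map_add, inner_add_left]
      smul_left := fun v w r => by
        refine tendsto_nhds_unique (hip (r • v) w) ?_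
        refine ((hip v w).const_mul _).congr fun n => ?_
        rw [map_smul, inner_smul_left] }
  let _ : SeminormedAddCommGroup V := InnerProductSpace.Core.toSeminormedAddCommGroup (𝕜 := ℂ)
  let _ : InnerProductSpace ℂ V := InnerProductSpace.ofCore core
  have hnorm : ∀ v : V, Tendsto (fun n => ‖Φ n v‖) uF (𝓝 ‖v‖) := by
    intro v
    have h1 := (Complex.continuous_re.tendsto _).comp (hip v v)
    have h2 : (ip v v).re = ‖v‖ ^ 2 := by
      have := inner_self_eq_norm_sq (𝕜 := ℂ) v
      exact this
    rw [h2] at h1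
    have h3 := h1.sqrt
    rw [Real.sqrt_sq (norm_nonneg _)] at h3
    refine h3.congr fun n => ?_
    have := inner_self_eq_norm_sq (𝕜 := ℂ) (Φ n v)
    simp only [Function.comp]
    change √(RCLike.re (inner ℂ (Φ n v) (Φ n v))) = _
    rw [this, Real.sqrt_sq (norm_nonneg _)]
  have hTnorm : ∀ x v, ‖T0 x v‖ = ‖v‖ := by
    intro x v
    refine tendsto_nhds_unique (hnorm _) ((hnorm v).congr fun n => ?_)
    rw [@norm_eq_sqrt_re_inner ℂ, @norm_eq_sqrt_re_inner ℂ, hTn]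
  let T : E → V →ₗᵢ[ℂ] V := fun x => ⟨T0 x, hTnorm x⟩
  have hl0b : ∀ v, ‖l0 v‖ ≤ C * ‖v‖ := by
    intro v
    refine le_of_tendsto_of_tendsto ((hl0 v).mono_left uF_le).norm ((hnorm v).const_mul C)
      (Eventually.of_forall fun n => ?_)
    refine (norm_inner_le_norm _ _).trans ?_
    exact mul_le_mul_of_nonneg_right (hθ n) (norm_nonneg _)
  let l : V →L[ℂ] ℂ := l0.mkContinuous C hl0b
  exact complete_model T hT0 hTa l

theorem gns {E : Type} [NormedAddCommGroup E] {K : Type} [NormedAddCommGroup K]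
    [InnerProductSpace ℂ K] (e : ℕ → E → K) (θ : ℕ → K) (C : ℝ) (he : ∀ n x, ‖e n x‖ ≤ C)
    (hθ : ∀ n, ‖θ n‖ ≤ C)
    (hinv : ∀ n x y z, inner ℂ (e n (z + x)) (e n (z + y)) = inner ℂ (e n x) (e n y))
    (a : E → ℂ) (ha : ∀ x, Tendsto (fun n => inner ℂ (e n (-x)) (θ n)) atTop (𝓝 (a x))) :
    ∃ (H : Type) (_ : NormedAddCommGroup H) (_ : InnerProductSpace ℂ H) (_ : CompleteSpace H)
      (U : E → H →ₗᵢ[ℂ] H) (ξ η : H), IsRep U ∧ (∀ x, a x = inner ℂ η (U x ξ)) ∧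
      ξ ∈ closure (Submodule.span ℂ (range fun z => U z η) : Set H) := by
  let Φ : ℕ → (E →₀ ℂ) →ₗ[ℂ] K := fun n => Finsupp.linearCombination ℂ (e n)
  have hΦs : ∀ n x c, Φ n (Finsupp.single x c) = c • e n x := fun n x c => by simp [Φ]
  let T0 : E → (E →₀ ℂ) →ₗ[ℂ] (E →₀ ℂ) := fun x => Finsupp.lmapDomain ℂ ℂ (fun y => x + y)
  have hT0s : ∀ x y c, T0 x (Finsupp.single y c) = Finsupp.single (x + y) c := fun x y c => by
    simp [T0, Finsupp.lmapDomain_apply, Finsupp.mapDomain_single]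
  let l0 : (E →₀ ℂ) →ₗ[ℂ] ℂ := Finsupp.linearCombination ℂ (fun x => star (a (-x)))
  have h1 : ∀ v : E →₀ ℂ, ∃ M : ℝ, ∀ n, ‖Φ n v‖ ≤ M := by
    intro v
    refine ⟨v.sum fun x c => ‖c‖ * C, fun n => ?_⟩
    simp only [Φ, Finsupp.linearCombination_apply, Finsupp.sum]
    refine norm_sum_le_of_le _ fun x _ => ?_
    rw [norm_smul]; gcongr; exact he n x
  have h2 : ∀ v, T0 0 v = v := by
    intro v; simp only [T0, Finsupp.lmapDomain_apply, zero_add]; exact Finsupp.mapDomain_id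
  have h3 : ∀ x y v, T0 (x + y) v = T0 x (T0 y v) := by
    intro x y v
    simp only [T0, Finsupp.lmapDomain_apply, ← Finsupp.mapDomain_comp]
    congr 1; funext z; simp [add_assoc]
  have h4 : ∀ n x v, inner ℂ (Φ n (T0 x v)) (Φ n (T0 x v)) = inner ℂ (Φ n v) (Φ n v) := by
    intro n x v
    have key : ∀ w : E →₀ ℂ, Φ n (T0 x w) = w.sum fun y c => c • e n (x + y) := by
      intro w
      simp only [Φ, T0, Finsupp.lmapDomain_apply, Finsupp.linearCombination_mapDomain]
      simp [Finsupp.linearCombination_apply]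
    rw [key]
    simp only [Φ, Finsupp.linearCombination_apply, Finsupp.sum, sum_inner, inner_sum,
      inner_smul_left, inner_smul_right, hinv]
  have h5 : ∀ v, Tendsto (fun n => inner ℂ (θ n) (Φ n v)) atTop (𝓝 (l0 v)) := by
    intro v
    induction v using Finsupp.induction_linear with
    | zero => simp
    | add f g hf hg => 
      simp only [map_add, inner_add_right]; exact hf.add hg
    | single x c =>
      simp only [hΦs, inner_smul_right, l0, Finsupp.linearCombination_single, smul_eq_mul]
      refine Tendsto.const_mul _ ?_
      have := (Complex.continuous_conj.tendsto _).comp (ha (-x))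
      refine this.congr fun n => ?_
      simp
  obtain ⟨H, i1, i2, i3, U, ι, ξ, hU, hd, hUι, hξ⟩ := gns_aux Φ θ C h1 hθ T0 h2 h3 h4 l0 h5
  refine ⟨H, i1, i2, i3, U, ξ, ι (Finsupp.single 0 1), hU, ?_, ?_⟩
  · intro x
    have h1 : ∀ h h' : H, inner ℂ h (U x h') = inner ℂ (U (-x) h) h' := by
      intro h h'
      rw [← (U x).inner_map_map (U (-x) h) h', ← hU.add, add_neg_cancel, hU.zero]
    rw [h1, hUι, hξ]
    rw [hT0s]
    simp [l0]
  · have : (Submodule.span ℂ (range fun z => U z (ι (Finsupp.single 0 1))) : Set H) ⊇ range ι := by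
      rintro _ ⟨v, rfl⟩
      induction v using Finsupp.induction_linear with
      | zero => rw [map_zero]; exact Submodule.zero_mem _
      | add f g hf hg => rw [map_add]; exact Submodule.add_mem _ hf hg
      | single x c =>
        have : ι (Finsupp.single x c) = c • U x (ι (Finsupp.single 0 1)) := by
          rw [hUι, ← map_smul]
          rw [hT0s]; simp
        rw [this]
        exact Submodule.smul_mem _ _ (Submodule.subset_span ⟨x, rfl⟩)
    exact closure_mono this (hd ξ)

end Model


section Model2
open Filter Topology

theorem bch_norm {E : Type} [NormedAddCommGroup E] [InnerProductSpace ℝ E] (γ x : E) :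
    ‖(bch γ x : ℂ)‖ = 1 := Circle.norm_coe _

theorem bch_neg {E : Type} [NormedAddCommGroup E] [InnerProductSpace ℝ E]
    [FiniteDimensional ℝ E] (γ x : E) : bch γ (-x) = (bch γ x)⁻¹ := by
  rw [← zero_sub, bch_sub, bch_zero, one_div]

theorem model_of_coeffs {E : Type} [NormedAddCommGroup E] [InnerProductSpace ℝ E]
    [FiniteDimensional ℝ E] (c : ℕ → E → ℂ) (C : ℝ)
    (hs : ∀ n, Summable fun γ => ‖c n γ‖) (hC : ∀ n, ∑' γ, ‖c n γ‖ ≤ C) (a : E → ℂ)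
    (ha : ∀ x, Tendsto (fun n => ∑' γ, c n γ * (bch γ x : ℂ)) atTop (𝓝 (a x))) :
    ∃ (H : Type) (_ : NormedAddCommGroup H) (_ : InnerProductSpace ℂ H) (_ : CompleteSpace H)
      (U : E → H →ₗᵢ[ℂ] H) (ξ η : H), IsRep U ∧ (∀ x, a x = inner ℂ η (U x ξ)) ∧
      ξ ∈ closure (Submodule.span ℂ (range fun z => U z η) : Set H) := by
  have hmem : ∀ n (f : E → ℂ), (∀ γ, ‖f γ‖ ^ 2 = ‖c n γ‖) → Memℓp f 2 := by
    intro n f hf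
    rw [memℓp_gen_iff (by norm_num)]
    refine (hs n).congr fun γ => ?_
    rw [← hf]; simp
  have hnorm : ∀ n (f : lp (fun _ : E => ℂ) 2), (∀ γ, ‖f γ‖ ^ 2 = ‖c n γ‖) → ‖f‖ ≤ √C := by
    intro n f hf
    apply Real.le_sqrt_of_sq_le
    have h1 := lp.norm_rpow_eq_tsum (p := 2) (by norm_num) f
    have h2 : ‖f‖ ^ 2 = ∑' γ, ‖c n γ‖ := by
      simpa [hf] using h1
    rw [h2]; exact hC n
  let e0 : ℕ → E → E → ℂ := fun n x γ => (√‖c n γ‖ : ℝ) * (bch γ x : ℂ)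
  have he0 : ∀ n x γ, ‖e0 n x γ‖ ^ 2 = ‖c n γ‖ := by
    intro n x γ
    simp only [e0, norm_mul, bch_norm, mul_one, Complex.norm_real]
    rw [Real.norm_of_nonneg (Real.sqrt_nonneg _), Real.sq_sqrt (norm_nonneg _)]
  let θ0 : ℕ → E → ℂ := fun n γ => c n γ / (√‖c n γ‖ : ℝ)
  have hθ0 : ∀ n γ, ‖θ0 n γ‖ ^ 2 = ‖c n γ‖ := by
    intro n γ
    simp only [θ0, norm_div, Complex.norm_real, div_pow]
    rw [Real.norm_of_nonneg (Real.sqrt_nonneg _), Real.sq_sqrt (norm_nonneg _)]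
    by_cases h : ‖c n γ‖ = 0
    · simp [h]
    · field_simp
  let e : ℕ → E → lp (fun _ : E => ℂ) 2 := fun n x => ⟨e0 n x, hmem n _ (he0 n x)⟩
  let θ : ℕ → lp (fun _ : E => ℂ) 2 := fun n => ⟨θ0 n, hmem n _ (hθ0 n)⟩
  refine gns e θ (√C) (fun n x => hnorm n _ (he0 n x)) (fun n => hnorm n _ (hθ0 n)) ?_ a ?_
  · intro n x y z
    rw [lp.inner_eq_tsum, lp.inner_eq_tsum]
    refine tsum_congr fun γ => ?_
    change inner ℂ (e0 n (z + x) γ) (e0 n (z + y) γ) = inner ℂ (e0 n x γ) (e0 n y γ)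
    have hz : ∀ w, (bch γ (z + w) : ℂ) = bch γ z * bch γ w := by
      intro w; rw [bch_add]; rfl
    have h1 : (starRingEnd ℂ) (bch γ z : ℂ) * (bch γ z : ℂ) = 1 := by
      rw [← Circle.coe_inv_eq_conj, ← Circle.coe_mul]; simp
    simp only [e0, RCLike.inner_apply, map_mul, hz]
    linear_combination ((√‖c n γ‖ : ℝ) * (bch γ y : ℂ) * ((starRingEnd ℂ) ((√‖c n γ‖ : ℝ) : ℂ) *
      (starRingEnd ℂ) (bch γ x : ℂ))) * h1
  · intro x
    refine (ha x).congr fun n => ?_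
    rw [lp.inner_eq_tsum]
    refine tsum_congr fun γ => ?_
    change _ = inner ℂ (e0 n (-x) γ) (θ0 n γ)
    have h1 : (starRingEnd ℂ) (bch γ (-x) : ℂ) = (bch γ x : ℂ) := by
      rw [← Circle.coe_inv_eq_conj, bch_neg, inv_inv]
    simp only [e0, θ0, RCLike.inner_apply, map_mul, h1, Complex.conj_ofReal]
    by_cases h : ‖c n γ‖ = 0
    · rw [norm_eq_zero] at h; simp [h]
    · have : ((√‖c n γ‖ : ℝ) : ℂ) ≠ 0 := by
        rw [Complex.ofReal_ne_zero, Real.sqrt_ne_zero (norm_nonneg _)]; exact h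
      field_simp

theorem ap_of_coeffs {E : Type} [NormedAddCommGroup E] [InnerProductSpace ℝ E]
    [FiniteDimensional ℝ E] (c : E → ℂ) (hs : Summable fun γ => ‖c γ‖) {ε : ℝ} (hε : 0 < ε) :
    ∀ᶠ τ in bohr E, ∀ x, ‖(∑' γ, c γ * (bch γ (x + τ) : ℂ)) - ∑' γ, c γ * (bch γ x : ℂ)‖ < ε := by
  have hsum : ∀ τ, Summable fun γ => ‖c γ‖ * ‖(bch γ τ : ℂ) - 1‖ := by
    intro τ
    refine Summable.of_nonneg_of_le (fun γ => by positivity) (fun γ => ?_) (hs.mul_right 2)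
    gcongr
    refine (norm_sub_le _ _).trans ?_
    rw [bch_norm, norm_one]; norm_num
  have h1 : Tendsto (fun τ => ∑' γ, ‖c γ‖ * ‖(bch γ τ : ℂ) - 1‖) (bohr E)
      (𝓝 (∑' γ : E, (0:ℝ))) := by
    refine tendsto_tsum_of_dominated_convergence (hs.mul_right 2) (fun γ => ?_)
      (Eventually.of_forall fun τ γ => ?_)
    · have h2 : Tendsto (fun τ => (bch γ τ : ℂ)) (bohr E) (𝓝 ((1 : Circle) : ℂ)) :=
        (continuous_subtype_val.tendsto (1 : Circle)).comp (bohr_tendsto γ)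
      have h3 := ((h2.sub_const 1).norm).const_mul ‖c γ‖
      simpa using h3
    · rw [Real.norm_of_nonneg (by positivity)]
      gcongr
      refine (norm_sub_le _ _).trans ?_
      rw [bch_norm, norm_one]; norm_num
  rw [tsum_zero] at h1
  filter_upwards [h1.eventually (gt_mem_nhds hε)] with τ hτ x
  have hs1 : ∀ y, Summable fun γ => c γ * (bch γ y : ℂ) := fun y =>
    Summable.of_norm (by simpa [bch_norm] using hs)
  rw [← (hs1 _).tsum_sub (hs1 _)]
  refine lt_of_le_of_lt (tsum_of_norm_bounded (hsum τ).hasSum fun γ => ?_) hτ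
  rw [bch_add, Circle.coe_mul, ← mul_sub, norm_mul]
  have : (bch γ x : ℂ) * (bch γ τ : ℂ) - bch γ x = bch γ x * (bch γ τ - 1) := by ring
  rw [this, norm_mul, bch_norm, one_mul]

end Model2


section Analysis
open Filter Topology FourierTransform
variable {d : ℕ}

theorem exists_bump : ∃ ψ : Rd d → ℂ, ContDiff ℝ (⊤ : ℕ∞) ψ ∧ HasCompactSupport ψ ∧ ψ 0 = 1 ∧
    ∀ x, 1 ≤ ‖x‖ → ψ x = 0 := by
  let f : ContDiffBump (0 : Rd d) := ⟨1/2, 1, by norm_num, by norm_num⟩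
  refine ⟨fun x => ((f x : ℝ) : ℂ), ?_, ?_, ?_, ?_⟩
  · exact Complex.ofRealCLM.contDiff.comp f.contDiff
  · exact f.hasCompactSupport.comp_left (g := fun x : ℝ => (x : ℂ)) (by simp)
  · have : f 0 = 1 := f.one_of_mem_closedBall (by simp [f])
    simp [this]
  · intro x hx
    have : f x = 0 := f.zero_of_le_dist (by simpa [f] using hx)
    simp [this]

/-- translated and rescaled bump -/
theorem scaled_bump {ψ : Rd d → ℂ} (h1 : ContDiff ℝ (⊤ : ℕ∞) ψ) (h2 : HasCompactSupport ψ) (ε : ℝ)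
    (hε : 0 < ε) (x : Rd d) : ∃ g : SchwartzMap (Rd d) ℂ, ∀ y, g y = ψ (ε⁻¹ • (y - x)) := by
  have hε' : ε⁻¹ ≠ 0 := inv_ne_zero hε.ne'
  let h : Rd d ≃ₜ Rd d := (Homeomorph.subRight x).trans (Homeomorph.smulOfNeZero ε⁻¹ hε')
  have hc : HasCompactSupport (fun y => ψ (ε⁻¹ • (y - x))) := h2.comp_homeomorph h
  have hd : ContDiff ℝ (⊤ : ℕ∞) (fun y => ψ (ε⁻¹ • (y - x))) :=
    h1.comp ((contDiff_id.sub contDiff_const).const_smul _)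
  exact ⟨hc.toSchwartzMap hd, fun y => rfl⟩

theorem fourierInv_scaled (g g0 : SchwartzMap (Rd d) ℂ) (ε : ℝ) (hε : 0 < ε) (x : Rd d)
    (hg : ∀ y, g y = g0 (ε⁻¹ • (y - x))) (γ : Rd d) :
    (𝓕⁻ g) γ = (ε : ℂ) ^ d * (𝓕⁻ g0) (ε • γ) * (bch γ x : ℂ) := by
  rw [fourierInv_coe, fourierInv_coe, Real.fourierInv_eq, Real.fourierInv_eq]
  have h1 : ∀ v : Rd d, Real.fourierChar ⟪v, γ⟫ • g v =
      (fun w => Real.fourierChar ⟪ε • w + x, γ⟫ • g0 w) (ε⁻¹ • (v - x)) := by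
    intro v
    simp only [hg]
    rw [smul_inv_smul₀ hε.ne', sub_add_cancel]
  rw [integral_congr_ae (Eventually.of_forall h1)]
  rw [integral_sub_right_eq_self (fun v => (fun w => Real.fourierChar ⟪ε • w + x, γ⟫ • g0 w) (ε⁻¹ • v)) x]
  have h3 := Measure.integral_comp_inv_smul_of_nonneg (volume : Measure (Rd d))
    (fun w => Real.fourierChar ⟪ε • w + x, γ⟫ • g0 w) hε.le
  refine h3.trans ?_
  simp only [finrank_euclideanSpace, Fintype.card_fin]
  have h2 : ∀ w : Rd d, Real.fourierChar ⟪ε • w + x, γ⟫ • g0 w =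
      (bch γ x : ℂ) * (Real.fourierChar ⟪w, ε • γ⟫ • g0 w) := by
    intro w
    rw [inner_add_left, AddChar.map_add_eq_mul, inner_smul_left, inner_smul_right, bch]
    simp [Circle.smul_def]; ring
  rw [integral_congr_ae (Eventually.of_forall h2), integral_const_mul]
  rw [Complex.real_smul]; push_cast; ring

theorem poisson {a b : Rd d → ℂ} {f : TemperedDist d} (hrep : RepMeasure a f)
    (hrepF : RepMeasure b (fourierTD f)) : ∃ (ψ : Rd d → ℂ) (u : SchwartzMap (Rd d) ℂ), ψ 0 = 1 ∧
    (∀ x, 1 ≤ ‖x‖ → ψ x = 0) ∧ ∀ ε > (0:ℝ),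
      (Summable fun γ => ‖b γ * ((ε : ℂ) ^ d * u (ε • γ))‖) ∧
      ∀ x, ∑' l, a l * ψ (ε⁻¹ • (l - x)) =
        ∑' γ, (b γ * ((ε : ℂ) ^ d * u (ε • γ))) * (bch γ x : ℂ) := by
  obtain ⟨ψ, hψ, hc, h0, h1⟩ := exists_bump (d := d)
  obtain ⟨g0, hg0⟩ := scaled_bump hψ hc 1 one_pos 0
  have hg0' : ∀ y, g0 y = ψ y := by intro y; rw [hg0]; simp
  refine ⟨ψ, 𝓕⁻ g0, h0, h1, fun ε hε => ?_⟩
  have key : ∀ x, ∃ φ : SchwartzMap (Rd d) ℂ, (∀ y, (𝓕 φ) y = ψ (ε⁻¹ • (y - x))) ∧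
      ∀ γ, φ γ = (ε : ℂ) ^ d * (𝓕⁻ g0) (ε • γ) * (bch γ x : ℂ) := by
    intro x
    obtain ⟨g, hg⟩ := scaled_bump hψ hc ε hε x
    refine ⟨𝓕⁻ g, fun y => ?_, fun γ => ?_⟩
    · rw [FourierTransform.fourier_fourierInv_eq, hg]
    · exact fourierInv_scaled g g0 ε hε x (fun y => by rw [hg, hg0']) γ
  refine ⟨?_, fun x => ?_⟩
  · obtain ⟨φ, -, h⟩ := key 0
    refine (hrepF.2.1 φ).congr fun γ => ?_
    rw [h, norm_mul _ (bch γ 0 : ℂ), bch_norm, mul_one, norm_mul (b γ)]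
  · obtain ⟨φ, h, h'⟩ := key x
    have e1 := hrepF.2.2 φ
    have e2 : fourierTD f φ = f (𝓕 φ) := rfl
    rw [e2, hrep.2.2] at e1
    simp only [h, h'] at e1
    rw [e1]
    exact tsum_congr fun γ => by ring

theorem schwartz_dyadic (u : SchwartzMap (Rd d) ℂ) : ∃ K : ℝ, 0 ≤ K ∧ ∀ y, ENNReal.ofReal ‖u y‖ ≤
    ENNReal.ofReal K * ∑' k : ℕ, if ‖y‖ < 2 ^ k then ENNReal.ofReal ((1/2) ^ (k * (d+1))) else 0 := by
  obtain ⟨K0, hK0, h0⟩ := u.decay 0 0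
  obtain ⟨K1, hK1, h1⟩ := u.decay (d+1) 0
  simp only [pow_zero, one_mul, norm_iteratedFDeriv_zero] at h0 h1
  refine ⟨K0 + K1 * 2 ^ (d+1), by positivity, fun y => ?_⟩
  have hex : ∃ k : ℕ, ‖y‖ < 2 ^ k := pow_unbounded_of_one_lt _ (by norm_num)
  classical
  have hk := Nat.find_spec hex
  have hmin := fun m => Nat.find_min hex (m := m)
  set k := Nat.find hex
  refine le_trans ?_ (mul_le_mul_right (ENNReal.le_tsum k) _)
  rw [if_pos hk, ← ENNReal.ofReal_mul (by positivity)]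
  apply ENNReal.ofReal_le_ofReal
  rcases hkk : k with _ | m
  · simp only [zero_mul, pow_zero, mul_one]
    have : 0 ≤ K1 * 2 ^ (d+1) := by positivity
    linarith [h0 y]
  · have hm := hmin m (by omega)
    push Not at hm
    have h2 := h1 y
    have h3 : ((2:ℝ) ^ m) ^ (d+1) * ‖u y‖ ≤ K1 := le_trans (by gcongr) h2
    have h4 : ((1:ℝ)/2) ^ ((m+1) * (d+1)) * ((2:ℝ) ^ m) ^ (d+1) * 2 ^ (d+1) = 1 := by
      rw [← pow_mul, mul_assoc, ← pow_add, add_mul, one_mul, ← mul_pow]; norm_num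
    calc ‖u y‖ = ((1:ℝ)/2) ^ ((m+1) * (d+1)) * 2 ^ (d+1) * (((2:ℝ) ^ m) ^ (d+1) * ‖u y‖) := by
          linear_combination (-‖u y‖) * h4
      _ ≤ ((1:ℝ)/2) ^ ((m+1) * (d+1)) * 2 ^ (d+1) * K1 := by gcongr
      _ ≤ _ := by
        have : 0 ≤ K0 * (1/2:ℝ) ^ ((m+1) * (d+1)) := by positivity
        nlinarith

theorem unif_bound {b : Rd d → ℂ}
    (hvar : ∃ C r₀ : ℝ, ∀ r ≥ r₀, ballVar b r ≤ ENNReal.ofReal (C * r ^ d))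
    (u : SchwartzMap (Rd d) ℂ) : ∃ M ε0 : ℝ, 0 < ε0 ∧ ∀ ε > (0:ℝ), ε < ε0 →
      (Summable fun γ => ‖b γ * ((ε : ℂ) ^ d * u (ε • γ))‖) →
      ∑' γ, ‖b γ * ((ε : ℂ) ^ d * u (ε • γ))‖ ≤ M := by
  obtain ⟨C, r0, hC⟩ := hvar
  obtain ⟨K, hK, hu⟩ := schwartz_dyadic u
  refine ⟨2 * K * |C|, 1 / (|r0| + 1), by positivity, fun ε hε hε0 hs => ?_⟩
  have hr0 : r0 ≤ 1 / ε := by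
    rw [lt_div_iff₀ (by positivity)] at hε0
    rw [le_div_iff₀ hε]
    nlinarith [le_abs_self r0]
  have hM : 0 ≤ 2 * K * |C| := by positivity
  rw [← ENNReal.ofReal_le_ofReal_iff hM, ENNReal.ofReal_tsum_of_nonneg (fun _ => norm_nonneg _) hs]
  calc ∑' γ, ENNReal.ofReal ‖b γ * ((ε : ℂ) ^ d * u (ε • γ))‖
      ≤ ∑' γ, ∑' k : ℕ, ENNReal.ofReal (K * ε ^ d * (1/2) ^ (k * (d+1))) *
          (if ‖γ‖ < 2 ^ k / ε then (‖b γ‖₊ : ℝ≥0∞) else 0) := by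
        refine ENNReal.tsum_le_tsum fun γ => ?_
        have h1 : ‖b γ * ((ε : ℂ) ^ d * u (ε • γ))‖ = ‖b γ‖ * (ε ^ d * ‖u (ε • γ)‖) := by
          rw [norm_mul, norm_mul, norm_pow, Complex.norm_real, Real.norm_of_nonneg hε.le]
        rw [h1, ENNReal.ofReal_mul (norm_nonneg _), ENNReal.ofReal_mul (by positivity)]
        refine (mul_le_mul_right (mul_le_mul_right (hu (ε • γ)) _) _).trans ?_
        rw [← ENNReal.tsum_mul_left, ← ENNReal.tsum_mul_left, ← ENNReal.tsum_mul_left]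
        refine ENNReal.tsum_le_tsum fun k => ?_
        have h2 : ‖ε • γ‖ < 2 ^ k ↔ ‖γ‖ < 2 ^ k / ε := by
          rw [norm_smul, Real.norm_of_nonneg hε.le, lt_div_iff₀ hε, mul_comm]
        simp only [h2]
        split_ifs
        · rw [ENNReal.ofReal_mul (by positivity), ENNReal.ofReal_mul hK, ofReal_norm]
          apply le_of_eq
          rw [enorm_eq_nnnorm]; ring
        · simp
    _ = ∑' k : ℕ, ENNReal.ofReal (K * ε ^ d * (1/2) ^ (k * (d+1))) * ballVar b (2 ^ k / ε) := by
        rw [ENNReal.tsum_comm]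
        refine tsum_congr fun k => ?_
        rw [ENNReal.tsum_mul_left]; rfl
    _ ≤ ∑' k : ℕ, ENNReal.ofReal (K * |C| * (1/2) ^ k) := by
        refine ENNReal.tsum_le_tsum fun k => ?_
        have h3 : r0 ≤ 2 ^ k / ε := by
          refine hr0.trans ?_
          gcongr
          exact one_le_pow₀ (by norm_num)
        refine (mul_le_mul_right (hC _ h3) _).trans ?_
        rw [← ENNReal.ofReal_mul (by positivity)]
        apply ENNReal.ofReal_le_ofReal
        have h4 : K * ε ^ d * (1/2:ℝ) ^ (k * (d+1)) * (C * (2 ^ k / ε) ^ d) = K * C * (1/2) ^ k := by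
          have e1 : (1/2:ℝ) ^ (k * (d+1)) * ((2:ℝ) ^ k) ^ d = (1/2) ^ k := by
            rw [mul_add, pow_add, mul_one, ← pow_mul, mul_right_comm, ← mul_pow]; norm_num
          have e2 : ε ^ d * ((2:ℝ) ^ k / ε) ^ d = (2 ^ k) ^ d := by
            rw [← mul_pow, mul_div_cancel₀ _ hε.ne']
          calc _ = K * C * ((1/2:ℝ) ^ (k * (d+1)) * (ε ^ d * ((2:ℝ) ^ k / ε) ^ d)) := by
                generalize ((2:ℝ) ^ k / ε) ^ d = z
                generalize (1/2:ℝ) ^ (k * (d+1)) = z'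
                ring
            _ = _ := by rw [e2, e1]
        rw [h4]
        gcongr
        exact le_abs_self C
    _ = ENNReal.ofReal (2 * K * |C|) := by
        rw [← ENNReal.ofReal_tsum_of_nonneg (fun k => by positivity)
          (summable_geometric_two.mul_left _), tsum_mul_left, tsum_geometric_two]
        congr 1; ring

end Analysis


section Final
open Filter Topology
variable {d : ℕ}

theorem Ltc.fullRank {P : AddSubgroup (Rd d)} (h : Ltc P) : IsFullRankLattice (P : Set (Rd d)) := by
  obtain ⟨b0, hb0⟩ := h.exists_basis
  have hfr : Module.finrank ℝ (Rd d) = d := by simp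
  let b : Module.Basis (Fin d) ℝ (Rd d) := b0.reindex (finCongr hfr)
  have hb : AddSubgroup.toIntSubmodule P = Submodule.span ℤ (Set.range b) := by
    rw [hb0]; simp [b]
  let e : Module.Basis (Fin d) ℝ (Rd d) := (EuclideanSpace.basisFun (Fin d) ℝ).toBasis
  let T : Rd d ≃ₗ[ℝ] Rd d := e.equiv b (Equiv.refl _)
  have hT : ∀ x : Rd d, T x = ∑ i, x i • b i := by
    intro x
    rw [← e.sum_repr x]
    simp only [map_sum, map_smul]
    refine Finset.sum_congr rfl fun i _ => ?_
    rw [e.sum_repr x]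
    have h1 : T (e i) = b i := by simp [T, Module.Basis.equiv_apply]
    have h2 : e.repr x i = x i := by simp [e]
    rw [h1, h2]
  refine ⟨T.toLinearMap, T.bijective, ?_⟩
  ext x
  have h1 : x ∈ (P : Set (Rd d)) ↔ x ∈ Submodule.span ℤ (Set.range b) := by
    rw [← hb]; rfl
  rw [h1, Submodule.mem_span_range_iff_exists_fun]
  constructor
  · rintro ⟨c, rfl⟩
    refine ⟨WithLp.toLp 2 fun i => (c i : ℝ), fun i => ⟨c i, rfl⟩, ?_⟩
    change T _ = _
    rw [hT]
    exact Finset.sum_congr rfl fun i _ => Int.cast_smul_eq_zsmul ℝ (c i) (b i)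
  · rintro ⟨y, hy, rfl⟩
    choose c hc using hy
    refine ⟨c, ?_⟩
    change _ = T y
    rw [hT]
    refine Finset.sum_congr rfl fun i _ => ?_
    rw [hc, Int.cast_smul_eq_zsmul]

theorem final_aux (a : Rd d → ℂ) (f : TemperedDist d) (b : Rd d → ℂ)
    (hrep : RepMeasure a f)
    (hud : UniformlyDiscrete {x | a x ≠ 0})
    (hinf : ∃ ε > (0:ℝ), ∀ x : Rd d, a x ≠ 0 → ε ≤ ‖a x‖)
    (hrepF : RepMeasure b (fourierTD f))
    (hvar : ∃ C r₀ : ℝ, ∀ r ≥ r₀, ballVar b r ≤ ENNReal.ofReal (C * r ^ d)) :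
    ∃ ρ, LamH {x | a x ≠ 0} ρ ∧ Cov {x | a x ≠ 0} := by
  obtain ⟨ρ, hρ, hsep0⟩ := hud
  obtain ⟨κ, hκ, hgap⟩ := hinf
  have hsep : ∀ x y, a x ≠ 0 → a y ≠ 0 → x ≠ y → ρ ≤ ‖x - y‖ := by
    intro x y hx hy hxy
    rw [← dist_eq_norm]
    exact hsep0 x hx y hy hxy
  obtain ⟨ψ, u, hψ0, hψ1, hpo⟩ := poisson hrep hrepF
  obtain ⟨M, ε0, hε0, hM⟩ := unif_bound hvar u
  have hiso : ∀ x, ∃ δ > (0:ℝ), ∀ l, l ≠ x → a l ≠ 0 → δ ≤ ‖l - x‖ := by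
    intro x
    by_cases hx : ∃ l, l ≠ x ∧ a l ≠ 0 ∧ ‖l - x‖ < ρ / 2
    · obtain ⟨l, hl, hal, hlx⟩ := hx
      refine ⟨‖l - x‖, norm_pos_iff.2 (sub_ne_zero.2 hl), fun m hm ham => ?_⟩
      by_cases hml : m = l
      · rw [hml]
      · have h1 := hsep m l ham hal hml
        have h2 : ‖m - l‖ ≤ ‖m - x‖ + ‖l - x‖ := by
          have := norm_sub_le (m - x) (l - x)
          rwa [sub_sub_sub_cancel_right] at this
        linarith
    · push Not at hx
      exact ⟨ρ / 2, by positivity, fun l hl hal => hx l hl hal⟩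
  have hval : ∀ x ε δ, 0 < ε → ε ≤ δ → (∀ l, l ≠ x → a l ≠ 0 → δ ≤ ‖l - x‖) →
      ∑' l, a l * ψ (ε⁻¹ • (l - x)) = a x := by
    intro x ε δ hε hεδ hδ
    rw [tsum_eq_single x]
    · simp [hψ0]
    · intro l hl
      by_cases hal : a l = 0
      · simp [hal]
      · rw [hψ1, mul_zero]
        rw [norm_smul, norm_inv, Real.norm_of_nonneg hε.le, inv_mul_eq_div, one_le_div hε]
        exact hεδ.trans (hδ l hl hal)
  -- almost periodicity
  have hap : ∀ δ > 0, ∀ᶠ τ in bohr (Rd d), ∀ x, a x ≠ 0 → ∃ y, a y ≠ 0 ∧ ‖x + τ - y‖ < δ := by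
    intro δ hδ
    have hη : 0 < min δ ρ := lt_min hδ hρ
    obtain ⟨hs, hF⟩ := hpo _ hη
    filter_upwards [ap_of_coeffs _ hs hκ] with τ hτ x hx
    have h1 := hτ x
    rw [← hF, ← hF, hval x (min δ ρ) ρ hη (min_le_right _ _)
      (fun l hl hal => hsep l x hal hx hl)] at h1
    by_contra hcon
    push Not at hcon
    have h2 : ∑' l, a l * ψ ((min δ ρ)⁻¹ • (l - (x + τ))) = 0 := by
      rw [← tsum_zero (α := ℂ) (β := Rd d)]
      refine tsum_congr fun l => ?_
      by_cases hal : a l = 0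
      · simp [hal]
      · rw [hψ1, mul_zero]
        rw [norm_smul, norm_inv, Real.norm_of_nonneg hη.le, inv_mul_eq_div, one_le_div hη,
          norm_sub_rev]
        exact (min_le_left _ _).trans (hcon l hal)
    rw [h2, zero_sub, norm_neg] at h1
    exact absurd (hgap x hx) (not_le.2 h1)
  -- the model
  let ε : ℕ → ℝ := fun n => ε0 / (n + 2)
  have hεp : ∀ n, 0 < ε n := fun n => by positivity
  have hεl : ∀ n, ε n < ε0 := fun n => by
    have : (0:ℝ) ≤ n := Nat.cast_nonneg n
    rw [div_lt_iff₀ (by positivity)]; nlinarith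
  have hεt : Tendsto ε atTop (𝓝 0) :=
    tendsto_const_nhds.div_atTop
      (tendsto_atTop_add_const_right _ _ tendsto_natCast_atTop_atTop)
  have hlim : ∀ x, Tendsto (fun n => ∑' γ, (b γ * ((ε n : ℂ) ^ d * u (ε n • γ))) * (bch γ x : ℂ))
      atTop (𝓝 (a x)) := by
    intro x
    obtain ⟨δ, hδ, hx⟩ := hiso x
    refine tendsto_const_nhds.congr' ?_
    filter_upwards [hεt.eventually (gt_mem_nhds hδ)] with n hn
    rw [← (hpo _ (hεp n)).2 x]
    exact (hval x _ δ (hεp n) (le_of_lt hn) hx).symm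
  obtain ⟨H, _, _, _, U, ξ, η, hU, ha, hcl⟩ := model_of_coeffs
    (fun n γ => b γ * ((ε n : ℂ) ^ d * u (ε n • γ))) M (fun n => (hpo _ (hεp n)).1)
    (fun n => hM _ (hεp n) (hεl n) (hpo _ (hεp n)).1) a hlim
  refine ⟨ρ, ⟨hρ, ?_, ?_, ?_⟩, cov_of_model hU ha hκ hgap hρ hsep hcl⟩
  · intro x hx y hy hxy
    by_contra hne
    exact absurd (hsep x y hx hy hne) (not_le.2 hxy)
  · exact hap
  · intro P hP l0 T0 hT0 h0
    exact lattice_of_model hU ha hκ hgap hρ hsep hap hP hT0 h0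

theorem final_thm (a : Rd d → ℂ) (f : TemperedDist d) (b : Rd d → ℂ)
    (hrep : RepMeasure a f)
    (hud : UniformlyDiscrete {x | a x ≠ 0})
    (hinf : ∃ ε > (0:ℝ), ∀ x : Rd d, a x ≠ 0 → ε ≤ ‖a x‖)
    (hrepF : RepMeasure b (fourierTD f))
    (hvar : ∃ C r₀ : ℝ, ∀ r ≥ r₀, ballVar b r ≤ ENNReal.ofReal (C * r ^ d)) :
    ∃ (J : ℕ) (L : Fin J → Set (Rd d)) (v : Fin J → Rd d),
      (∀ j, IsFullRankLattice (L j)) ∧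
      {x | a x ≠ 0} = (⋃ j, (fun y => v j + y) '' (L j)) ∧
      ∀ i j, i ≠ j →
        Disjoint ((fun y => v i + y) '' (L i)) ((fun y => v j + y) '' (L j)) := by
  obtain ⟨ρ, hL, hc⟩ := final_aux a f b hrep hud hinf hrepF hvar
  obtain ⟨C, hC, hCl, hCu, hCd⟩ := comb_main hL hc
  have hfin : Finite C := hC
  obtain ⟨J, ⟨e⟩⟩ := Finite.exists_equiv_fin C
  choose v P hP hcP using fun c : C => hCl c c.2
  refine ⟨J, fun j => (P (e.symm j) : Set (Rd d)), fun j => v (e.symm j), fun j => (hP _).fullRank,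
    ?_, ?_⟩
  · simp only [← hcP]
    rw [hCu, sUnion_eq_iUnion]
    exact (e.symm.surjective.iUnion_comp (fun c : C => (c : Set (Rd d)))).symm
  · intro i j hij
    simp only [← hcP]
    refine hCd _ (e.symm i).2 _ (e.symm j).2 fun h => hij ?_
    exact e.symm.injective (Subtype.ext h)

end Final

/-- (Theorem 5.) Let `μ` be a pure point measure in
`S*(ℝ^d)` with uniformly discrete support `Λ` and `inf_{λ∈Λ} |μ(λ)| > 0`,
whose Fourier transform is a pure point measure with `|μ̂|(B(0,r)) = O(r^d)`.
Then `Λ` is a finite union of translates of several pairwise disjoint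
full-rank lattices. -/
theorem statement17 {d : ℕ} (a : Rd d → ℂ) (f : TemperedDist d) (b : Rd d → ℂ)
    (hrep : RepMeasure a f)
    (hud : UniformlyDiscrete {x | a x ≠ 0})
    (hinf : ∃ ε > (0:ℝ), ∀ x : Rd d, a x ≠ 0 → ε ≤ ‖a x‖)
    (hrepF : RepMeasure b (fourierTD f))
    (hvar : ∃ C r₀ : ℝ, ∀ r ≥ r₀, ballVar b r ≤ ENNReal.ofReal (C * r ^ d)) :
    ∃ (J : ℕ) (L : Fin J → Set (Rd d)) (v : Fin J → Rd d),
      (∀ j, IsFullRankLattice (L j)) ∧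
      {x | a x ≠ 0} = (⋃ j, (fun y => v j + y) '' (L j)) ∧
      ∀ i j, i ≠ j →
        Disjoint ((fun y => v i + y) '' (L i)) ((fun y => v j + y) '' (L j)) := by
  exact final_thm a f b hrep hud hinf hrepF hvar
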